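/- arXiv:1612.02412 — 2 statements merged into one kernel-verified Lean document; each statement's English description precedes it below -/
import Mathlib

section
/- Eight shortcuts improve on seven: there exists a set S of eight shortcuts with diam(S) ≤ π − 0.5822 < π/2 + 1. Hence diam(8) < diam(7) = π/2 + 1. -/
open Real MeasureTheory

/-- Arc distance between points on the unit circle, given by their polar angles:
the length of the shorter arc between them. -/
noncomputable def arcDist (p q : ℝ) : ℝ := ⨅ n : ℤ, |p - q + 2 * π * n|

/-- Euclidean length of the chord between the circle points with angles `u` and `v`. -/
noncomputable def chordLen (u v : ℝ) : ℝ := 2 * Real.sin (arcDist u v / 2)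

/-- A pair of angles is a genuine shortcut (chord) if its endpoints are distinct points. -/
def IsShortcut (s : ℝ × ℝ) : Prop := arcDist s.1 s.2 ≠ 0

/-- δ(a) = arcsin(a/2) - a/2. -/
noncomputable def sdelta (a : ℝ) : ℝ := Real.arcsin (a / 2) - a / 2

/-- Cost of a path that starts at `p`, fully traverses the listed chords in order
(travelling along the circle in between), and ends at `q`. -/
noncomputable def walkCost (q : ℝ) : ℝ → List (ℝ × ℝ) → ℝ
  | p, [] => arcDist p q
  | p, e :: L => arcDist p e.1 + chordLen e.1 e.2 + walkCost q e.2 L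

/-- Shortest-path distance from `p` to `q` using the shortcuts of `S`
(each usable in either orientation, and always traversed completely). -/
noncomputable def dS (S : Finset (ℝ × ℝ)) (p q : ℝ) : ℝ :=
  sInf {c | ∃ L : List (ℝ × ℝ), (∀ e ∈ L, e ∈ S ∨ (e.2, e.1) ∈ S) ∧ c = walkCost q p L}

/-- Diameter of the circle augmented with the shortcuts of `S`. -/
noncomputable def diamS (S : Finset (ℝ × ℝ)) : ℝ :=
  sSup {d | ∃ p q : ℝ, d = dS S p q}

/-- diam(k): the optimal diameter achievable with `k` shortcuts. -/
noncomputable def diamK (k : ℕ) : ℝ :=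
  sInf {d | ∃ S : Finset (ℝ × ℝ), S.card = k ∧ (∀ s ∈ S, IsShortcut s) ∧ d = diamS S}

/-- Distance from `p` to `q` when a single shortcut with endpoints `u`, `v` is available. -/
noncomputable def dOne (u v p q : ℝ) : ℝ :=
  min (arcDist p q)
    (min (arcDist p u + chordLen u v + arcDist v q)
      (arcDist p v + chordLen u v + arcDist u q))

/-- Two angles represent the same point of the circle. -/
def SamePoint (p q : ℝ) : Prop := arcDist p q = 0

/-- Two pairs of angles represent the same chord of the circle. -/
def SameChord (s t : ℝ × ℝ) : Prop :=
  (SamePoint s.1 t.1 ∧ SamePoint s.2 t.2) ∨ (SamePoint s.1 t.2 ∧ SamePoint s.2 t.1)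

/-- `p` lies in the deep umbra of the shortcut from `u` to `u + β`
(where `0 < β ≤ π` is the counterclockwise arc spanned by the shortcut):
`p` lies in the inner umbra, and `|p u'| + |s| ≥ d(p, v')` where `u'` is the
endpoint closer to `p` and `v'` the other one. -/
def InDeepUmbra (u β p : ℝ) : Prop :=
  (∃ t : ℝ, sdelta (chordLen u (u + β)) ≤ t ∧ t ≤ β - sdelta (chordLen u (u + β)) ∧
    arcDist p (u + t) = 0) ∧
  (arcDist p u ≤ arcDist p (u + β) →
    arcDist p (u + β) ≤ chordLen p u + chordLen u (u + β)) ∧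
  (arcDist p (u + β) ≤ arcDist p u →
    arcDist p u ≤ chordLen p (u + β) + chordLen u (u + β))

/-- `d` equals δ*_k : for `k ∈ {3,4,5}` this is `δ(a*_k)` where `a*_k + δ(a*_k) = (k-1)π/k`,
and for `k = 6` it is `δ(2) = π/2 - 1`. -/
def dstarSpec (k : ℕ) (d : ℝ) : Prop :=
  (k = 6 ∧ d = sdelta 2) ∨
    (∃ a, a ∈ Set.Icc (0 : ℝ) 2 ∧ a + sdelta a = ((k : ℝ) - 1) * π / k ∧ d = sdelta a)


/-! ### Basic properties of the arc distance -/

lemma arcDist_le (p q : ℝ) (n : ℤ) : arcDist p q ≤ |p - q + 2 * π * n| := by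
  unfold arcDist
  exact ciInf_le ⟨0, by rintro _ ⟨n, rfl⟩; exact abs_nonneg _⟩ n

lemma arcDist_attain (p q : ℝ) : ∃ n : ℤ, arcDist p q = |p - q + 2 * π * n| := by
  have hpi := Real.pi_pos
  refine ⟨-round ((p - q) / (2 * π)), le_antisymm (arcDist_le _ _ _) ?_⟩
  unfold arcDist
  refine le_ciInf fun n => ?_
  have h := round_le ((p - q) / (2 * π)) (-n)
  have e1 : ∀ z : ℝ, |p - q + 2 * π * z| = (2 * π) * |(p - q) / (2 * π) - (-z)| := by
    intro z
    rw [← abs_of_pos (show (0:ℝ) < 2 * π by positivity), ← abs_mul,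
      abs_of_pos (show (0:ℝ) < 2 * π by positivity)]
    congr 1
    field_simp
    ring
  rw [e1, e1]
  push_cast at h ⊢
  rw [neg_neg]
  exact mul_le_mul_of_nonneg_left h (by positivity)

lemma arcDist_nonneg (p q : ℝ) : 0 ≤ arcDist p q := by
  obtain ⟨n, h⟩ := arcDist_attain p q
  rw [h]; exact abs_nonneg _

lemma arcDist_le_abs (p q : ℝ) : arcDist p q ≤ |p - q| := by
  simpa using arcDist_le p q 0

lemma arcDist_comm (p q : ℝ) : arcDist p q = arcDist q p := by
  have key : ∀ p q : ℝ, arcDist p q ≤ arcDist q p := by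
    intro p q
    obtain ⟨n, h⟩ := arcDist_attain q p
    rw [h]
    refine (arcDist_le p q (-n)).trans (le_of_eq ?_)
    rw [← abs_neg]
    congr 1
    push_cast
    ring
  exact le_antisymm (key _ _) (key _ _)

lemma arcDist_triangle (p q r : ℝ) : arcDist p r ≤ arcDist p q + arcDist q r := by
  obtain ⟨n, h⟩ := arcDist_attain p q
  obtain ⟨k, h'⟩ := arcDist_attain q r
  rw [h, h']
  refine (arcDist_le p r (n + k)).trans (le_trans (le_of_eq ?_) (abs_add_le _ _))
  congr 1
  push_cast
  ring

lemma arcDist_le_pi (p q : ℝ) : arcDist p q ≤ π := by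
  have hpi := Real.pi_pos
  have h := abs_sub_round ((p - q) / (2 * π))
  refine (arcDist_le p q (-round ((p - q) / (2 * π)))).trans ?_
  have e1 : p - q + 2 * π * ((-round ((p - q) / (2 * π)) : ℤ) : ℝ)
      = (2 * π) * ((p - q) / (2 * π) - round ((p - q) / (2 * π))) := by
    push_cast
    field_simp
    ring
  rw [e1, abs_mul, abs_of_pos (show (0:ℝ) < 2 * π by positivity)]
  nlinarith

/-- If the real difference lies in `[a, 2π - a]`, the arc distance is at least `a`. -/
lemma le_arcDist {p q a : ℝ} (h1 : a ≤ p - q) (h2 : p - q ≤ 2 * π - a) : a ≤ arcDist p q := by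
  have hpi := Real.pi_pos
  obtain ⟨n, h⟩ := arcDist_attain p q
  rw [h]
  rcases le_or_gt 0 n with hn | hn
  · have : (0:ℝ) ≤ n := by exact_mod_cast hn
    refine le_trans ?_ (le_abs_self _)
    nlinarith
  · have : (n:ℝ) ≤ -1 := by exact_mod_cast (by omega : n ≤ -1)
    refine le_trans ?_ (neg_le_abs _)
    nlinarith

lemma arcDist_shift (p q : ℝ) (n : ℤ) : arcDist p (q + 2 * π * n) = arcDist p q := by
  have key : ∀ (q : ℝ) (n : ℤ), arcDist p (q + 2 * π * n) ≤ arcDist p q := by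
    intro q n
    obtain ⟨k, h⟩ := arcDist_attain p q
    rw [h]
    refine (arcDist_le _ _ (k + n)).trans (le_of_eq ?_)
    congr 1
    push_cast
    ring
  refine le_antisymm (key _ _) ?_
  have := key (q + 2 * π * n) (-n)
  refine le_trans (le_of_eq ?_) this
  congr 1
  push_cast
  ring

lemma chordLen_nonneg (u v : ℝ) : 0 ≤ chordLen u v := by
  unfold chordLen
  have h1 := arcDist_nonneg u v
  have h2 := arcDist_le_pi u v
  have := Real.sin_nonneg_of_nonneg_of_le_pi (x := arcDist u v / 2) (by linarith) (by linarith)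
  linarith

lemma chordLen_comm (u v : ℝ) : chordLen u v = chordLen v u := by
  unfold chordLen
  rw [arcDist_comm]

lemma chordLen_le_arcDist (u v : ℝ) : chordLen u v ≤ arcDist u v := by
  unfold chordLen
  have h1 := arcDist_nonneg u v
  have := Real.sin_le (x := arcDist u v / 2) (by linarith)
  linarith

/-- Saving of a chord. -/
noncomputable def sav (e : ℝ × ℝ) : ℝ := arcDist e.1 e.2 - chordLen e.1 e.2

/-- Length of a chord. -/
noncomputable def clen (e : ℝ × ℝ) : ℝ := chordLen e.1 e.2

lemma sav_nonneg (e : ℝ × ℝ) : 0 ≤ sav e := by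
  have := chordLen_le_arcDist e.1 e.2
  unfold sav
  linarith

lemma clen_nonneg (e : ℝ × ℝ) : 0 ≤ clen e := chordLen_nonneg _ _

lemma clen_swap (e : ℝ × ℝ) : clen e.swap = clen e := chordLen_comm _ _

lemma sav_swap (e : ℝ × ℝ) : sav e.swap = sav e := by
  unfold sav
  rw [Prod.fst_swap, Prod.snd_swap, chordLen_comm, arcDist_comm]

/-! ### Walks -/

lemma walkCost_cons (q p : ℝ) (e : ℝ × ℝ) (L : List (ℝ × ℝ)) :
    walkCost q p (e :: L) = arcDist p e.1 + clen e + walkCost q e.2 L := rfl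

lemma walkCost_nil (q p : ℝ) : walkCost q p [] = arcDist p q := rfl

lemma walkCost_append (q p : ℝ) (L₁ : List (ℝ × ℝ)) (e : ℝ × ℝ) (L₂ : List (ℝ × ℝ)) :
    walkCost q p (L₁ ++ e :: L₂) = walkCost e.1 p L₁ + clen e + walkCost q e.2 L₂ := by
  induction L₁ generalizing p with
  | nil => simp [walkCost_cons, walkCost_nil]
  | cons a L ih => simp only [List.cons_append, walkCost_cons, ih]; ring

lemma clen_sum_le (q p : ℝ) (L : List (ℝ × ℝ)) : (L.map clen).sum ≤ walkCost q p L := by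
  induction L generalizing p with
  | nil => simpa [walkCost_nil] using arcDist_nonneg p q
  | cons a L ih =>
    have := ih a.2
    have := arcDist_nonneg p a.1
    simp only [List.map_cons, List.sum_cons, walkCost_cons]
    linarith

lemma walkCost_nonneg (q p : ℝ) (L : List (ℝ × ℝ)) : 0 ≤ walkCost q p L := by
  refine le_trans (List.sum_nonneg ?_) (clen_sum_le q p L)
  intro x hx
  obtain ⟨e, _, rfl⟩ := List.mem_map.1 hx
  exact clen_nonneg e

lemma arcDist_le_walk (q p : ℝ) (L : List (ℝ × ℝ)) :
    arcDist p q ≤ walkCost q p L + (L.map sav).sum := by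
  induction L generalizing p with
  | nil => simp [walkCost_nil]
  | cons a L ih =>
    have h1 := ih a.2
    have h2 := arcDist_triangle p a.1 q
    have h3 := arcDist_triangle a.1 a.2 q
    have h4 : sav a = arcDist a.1 a.2 - clen a := rfl
    simp only [List.map_cons, List.sum_cons, walkCost_cons]
    linarith

lemma walkCost_start (q p p' : ℝ) (L : List (ℝ × ℝ)) :
    walkCost q p L ≤ arcDist p p' + walkCost q p' L := by
  cases L with
  | nil => exact arcDist_triangle _ _ _
  | cons a L =>
    have := arcDist_triangle p p' a.1
    simp only [walkCost_cons]
    linarith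

lemma walkCost_append_le (q p m : ℝ) (L₁ L₂ : List (ℝ × ℝ)) :
    walkCost q p (L₁ ++ L₂) ≤ walkCost m p L₁ + walkCost q m L₂ := by
  induction L₁ generalizing p with
  | nil => simpa [walkCost_nil] using walkCost_start q p m L₂
  | cons a L ih =>
    have := ih a.2
    simp only [List.cons_append, walkCost_cons]
    linarith

/-- Two uses of chords are unrelated. -/
def Unrel (e e' : ℝ × ℝ) : Prop := e' ≠ e ∧ e' ≠ e.swap

lemma exists_bad_pair (L : List (ℝ × ℝ)) (h : ¬ L.Pairwise Unrel) :
    ∃ (L₁ L₂ L₃ : List (ℝ × ℝ)) (a b : ℝ × ℝ), L = L₁ ++ a :: (L₂ ++ b :: L₃) ∧ ¬ Unrel a b := by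
  induction L with
  | nil => exact absurd List.Pairwise.nil h
  | cons x L ih =>
    rw [List.pairwise_cons] at h
    by_cases h1 : L.Pairwise Unrel
    · have : ∃ b ∈ L, ¬ Unrel x b := by
        by_contra hc
        push Not at hc
        exact h ⟨hc, h1⟩
      obtain ⟨b, hb, hb'⟩ := this
      obtain ⟨L₂, L₃, rfl⟩ := List.append_of_mem hb
      exact ⟨[], L₂, L₃, x, b, rfl, hb'⟩
    · obtain ⟨L₁, L₂, L₃, a, b, rfl, hab⟩ := ih h1
      exact ⟨x :: L₁, L₂, L₃, a, b, rfl, hab⟩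

/-- Validity of a list of oriented chords. -/
def Valid (S : Finset (ℝ × ℝ)) (L : List (ℝ × ℝ)) : Prop := ∀ e ∈ L, e ∈ S ∨ (e.2, e.1) ∈ S

lemma exists_reduced (S : Finset (ℝ × ℝ)) (p q t : ℝ) (L : List (ℝ × ℝ)) (hL : Valid S L)
    (hc : walkCost q p L < t) :
    ∃ L', Valid S L' ∧ walkCost q p L' < t ∧ L'.Pairwise Unrel := by
  induction hn : L.length using Nat.strong_induction_on generalizing L with
  | _ n ih =>
    by_cases h : L.Pairwise Unrel
    · exact ⟨L, hL, hc, h⟩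
    · obtain ⟨L₁, L₂, L₃, a, b, rfl, hab⟩ := exists_bad_pair L h
      have hcost : walkCost q p (L₁ ++ a :: (L₂ ++ b :: L₃)) =
          walkCost a.1 p L₁ + clen a + (walkCost b.1 a.2 L₂ + clen b + walkCost q b.2 L₃) := by
        rw [walkCost_append, walkCost_append]
      have n1 := clen_nonneg a
      have n2 := clen_nonneg b
      have n3 := walkCost_nonneg b.1 a.2 L₂
      have hab' : b = a ∨ b = a.swap := by
        unfold Unrel at hab
        tauto
      rcases hab' with rfl | rfl
      · refine ih (L₁ ++ b :: L₃).length ?_ (L₁ ++ b :: L₃) ?_ ?_ rfl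
        · rw [← hn]; simp only [List.length_append, List.length_cons]; omega
        · intro e he
          apply hL
          simp only [List.mem_append, List.mem_cons] at he ⊢
          tauto
        · rw [walkCost_append]
          linarith
      · refine ih (L₁ ++ L₃).length ?_ (L₁ ++ L₃) ?_ ?_ rfl
        · rw [← hn]; simp only [List.length_append, List.length_cons]; omega
        · intro e he
          apply hL
          simp only [List.mem_append, List.mem_cons] at he ⊢
          tauto
        · have := walkCost_append_le q p a.1 L₁ L₃
          simp only [Prod.snd_swap] at hcost
          linarith

open Classical in
/-- The element of `S` underlying an oriented chord. -/
noncomputable def key (S : Finset (ℝ × ℝ)) (e : ℝ × ℝ) : ℝ × ℝ := if e ∈ S then e else e.swap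

lemma key_cases (S : Finset (ℝ × ℝ)) (e : ℝ × ℝ) : key S e = e ∨ key S e = e.swap := by
  unfold key
  split_ifs <;> simp

lemma key_mem {S : Finset (ℝ × ℝ)} {e : ℝ × ℝ} (h : e ∈ S ∨ (e.2, e.1) ∈ S) : key S e ∈ S := by
  unfold key
  split_ifs with h1
  · exact h1
  · exact h.resolve_left h1

lemma clen_key (S : Finset (ℝ × ℝ)) (e : ℝ × ℝ) : clen (key S e) = clen e := by
  rcases key_cases S e with h | h <;> rw [h]
  exact clen_swap e

lemma sav_key (S : Finset (ℝ × ℝ)) (e : ℝ × ℝ) : sav (key S e) = sav e := by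
  rcases key_cases S e with h | h <;> rw [h]
  exact sav_swap e

lemma keys_nodup (S : Finset (ℝ × ℝ)) (L : List (ℝ × ℝ)) (h : L.Pairwise Unrel) :
    (L.map (key S)).Nodup := by
  rw [List.Nodup, List.pairwise_map]
  refine h.imp ?_
  intro a b hab heq
  unfold Unrel at hab
  rcases key_cases S a with h1 | h1 <;> rcases key_cases S b with h2 | h2 <;>
    rw [h1, h2] at heq
  · exact hab.1 heq.symm
  · exact hab.2 (by rw [heq, Prod.swap_swap])
  · exact hab.2 heq.symm
  · exact hab.1 (Prod.swap_injective heq.symm)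

/-- `(p,q)` is within `ρ` of the chord `i` in one of the two orientations. -/
def Cov (i : ℝ × ℝ) (p q ρ : ℝ) : Prop :=
  arcDist p i.1 + arcDist q i.2 < ρ ∨ arcDist p i.2 + arcDist q i.1 < ρ

open Classical in
lemma walk_pack (S : Finset (ℝ × ℝ)) (p q t : ℝ) (L₀ : List (ℝ × ℝ)) (hL₀ : Valid S L₀)
    (hc₀ : walkCost q p L₀ < t) :
    ∃ L : List (ℝ × ℝ), ∃ F : Finset (ℝ × ℝ), Valid S L ∧ walkCost q p L < t ∧
      (L.map (key S)).Nodup ∧ F = (L.map (key S)).toFinset ∧ F ⊆ S ∧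
      ∑ i ∈ F, clen i < t ∧ arcDist p q < t + ∑ i ∈ F, sav i ∧
      ∀ i ∈ F, Cov i p q (t - clen i + ∑ j ∈ F.erase i, sav j) := by
  obtain ⟨L, hL, hc, hp⟩ := exists_reduced S p q t L₀ hL₀ hc₀
  have hnd := keys_nodup S L hp
  have hsum : ∀ f : ℝ × ℝ → ℝ, (∀ e, f (key S e) = f e) →
      ∑ i ∈ (L.map (key S)).toFinset, f i = (L.map f).sum := by
    intro f hf
    rw [List.sum_toFinset f hnd, List.map_map]
    congr 1
    exact List.map_congr_left fun e _ => hf e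
  refine ⟨L, (L.map (key S)).toFinset, hL, hc, hnd, rfl, ?_, ?_, ?_, ?_⟩
  · intro i hi
    rw [List.mem_toFinset, List.mem_map] at hi
    obtain ⟨e, he, rfl⟩ := hi
    exact key_mem (hL e he)
  · rw [hsum clen (clen_key S)]
    exact lt_of_le_of_lt (clen_sum_le q p L) hc
  · rw [hsum sav (sav_key S)]
    have := arcDist_le_walk q p L
    linarith
  · intro i hi
    have hsi := Finset.add_sum_erase _ sav hi
    rw [hsum sav (sav_key S)] at hsi
    rw [List.mem_toFinset, List.mem_map] at hi
    obtain ⟨e, he, rfl⟩ := hi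
    obtain ⟨L₁, L₂, rfl⟩ := List.append_of_mem he
    rw [walkCost_append] at hc
    simp only [List.map_append, List.map_cons, List.sum_append, List.sum_cons] at hsi
    rw [sav_key] at hsi
    have h1 := arcDist_le_walk e.1 p L₁
    have h2 := arcDist_le_walk q e.2 L₂
    rw [arcDist_comm] at h2
    have h3 : arcDist p e.1 + arcDist q e.2 <
        t - clen (key S e) + ∑ j ∈ ((L₁ ++ e :: L₂).map (key S)).toFinset.erase (key S e), sav j := by
      rw [clen_key]
      simp only [List.map_append, List.map_cons] at hsi ⊢
      linarith
    rcases key_cases S e with h | h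
    · left
      rw [h] at h3 ⊢
      exact h3
    · right
      rw [h] at h3 ⊢
      exact h3

/-! ### Midpoint coordinates -/

/-- Half of the arc spanned by a chord. -/
noncomputable def hs (i : ℝ × ℝ) : ℝ := arcDist i.1 i.2 / 2

lemma hs_nonneg (i : ℝ × ℝ) : 0 ≤ hs i := by
  have := arcDist_nonneg i.1 i.2
  unfold hs
  linarith

lemma hs_le (i : ℝ × ℝ) : hs i ≤ π / 2 := by
  have := arcDist_le_pi i.1 i.2
  unfold hs
  linarith

lemma clen_eq (i : ℝ × ℝ) : clen i = 2 * Real.sin (hs i) := rfl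

lemma sav_eq (i : ℝ × ℝ) : sav i = 2 * hs i - 2 * Real.sin (hs i) := by
  unfold sav hs chordLen
  ring

lemma exists_mid (i : ℝ × ℝ) : ∃ μ : ℝ,
    (∀ p, arcDist p i.1 = arcDist p (μ - hs i) ∧ arcDist p i.2 = arcDist p (μ + hs i)) ∨
    (∀ p, arcDist p i.1 = arcDist p (μ + hs i) ∧ arcDist p i.2 = arcDist p (μ - hs i)) := by
  obtain ⟨n, h⟩ := arcDist_attain i.1 i.2
  have h2 : arcDist i.1 i.2 = 2 * hs i := by unfold hs; ring
  rw [h2] at h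
  rcases abs_cases (i.1 - i.2 + 2 * π * n) with ⟨h1, _⟩ | ⟨h1, _⟩
  · refine ⟨i.1 - hs i, Or.inr fun p => ⟨by congr 1; ring, ?_⟩⟩
    rw [show i.1 - hs i - hs i = i.2 + 2 * π * ((-n : ℤ) : ℝ) by push_cast; linarith,
      arcDist_shift]
  · refine ⟨i.1 + hs i, Or.inl fun p => ⟨by congr 1; ring, ?_⟩⟩
    rw [show i.1 + hs i + hs i = i.2 + 2 * π * ((-n : ℤ) : ℝ) by push_cast; linarith,
      arcDist_shift]

/-- Direction of the midpoint of the arc spanned by a chord. -/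
noncomputable def mid (i : ℝ × ℝ) : ℝ := (exists_mid i).choose

lemma mid_spec (i : ℝ × ℝ) :
    (∀ p, arcDist p i.1 = arcDist p (mid i - hs i) ∧ arcDist p i.2 = arcDist p (mid i + hs i)) ∨
    (∀ p, arcDist p i.1 = arcDist p (mid i + hs i) ∧ arcDist p i.2 = arcDist p (mid i - hs i)) :=
  (exists_mid i).choose_spec

lemma arcDist_mid_fst (i : ℝ × ℝ) : arcDist (mid i) i.1 = hs i := by
  have h0 := hs_nonneg i
  have h1 := hs_le i
  have hpi := Real.pi_pos
  rcases mid_spec i with h | h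
  · rw [(h _).1]
    refine le_antisymm ((arcDist_le_abs _ _).trans ?_) (le_arcDist (by linarith) (by linarith))
    rw [show mid i - (mid i - hs i) = hs i by ring, abs_of_nonneg h0]
  · rw [(h _).1, arcDist_comm]
    refine le_antisymm ((arcDist_le_abs _ _).trans ?_) (le_arcDist (by linarith) (by linarith))
    rw [show mid i + hs i - mid i = hs i by ring, abs_of_nonneg h0]

lemma arcDist_mid_snd (i : ℝ × ℝ) : arcDist (mid i) i.2 = hs i := by
  have h0 := hs_nonneg i
  have h1 := hs_le i
  have hpi := Real.pi_pos
  rcases mid_spec i with h | h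
  · rw [(h _).2, arcDist_comm]
    refine le_antisymm ((arcDist_le_abs _ _).trans ?_) (le_arcDist (by linarith) (by linarith))
    rw [show mid i + hs i - mid i = hs i by ring, abs_of_nonneg h0]
  · rw [(h _).2]
    refine le_antisymm ((arcDist_le_abs _ _).trans ?_) (le_arcDist (by linarith) (by linarith))
    rw [show mid i - (mid i - hs i) = hs i by ring, abs_of_nonneg h0]

lemma core_first {m μ ξ φ ρ t : ℝ} (hφ0 : 0 ≤ φ) (hφ : φ ≤ π / 2) (hρ : ρ ≤ t)
    (htpi : t ≤ π) (h1 : t ≤ ξ) (h2 : ξ ≤ 2 * π - t)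
    (h : arcDist (m - ξ / 2) (μ - φ) + arcDist (m + ξ / 2) (μ + φ) < ρ) :
    arcDist m μ < ρ / 2 ∧ ξ - 2 * φ < ρ := by
  have hpi := Real.pi_pos
  obtain ⟨n, hn⟩ := arcDist_attain (m - ξ / 2) (μ - φ)
  obtain ⟨k, hk⟩ := arcDist_attain (m + ξ / 2) (μ + φ)
  rw [hn, hk] at h
  have b1 := le_abs_self (m - ξ / 2 - (μ - φ) + 2 * π * n)
  have b2 := neg_le_abs (m - ξ / 2 - (μ - φ) + 2 * π * n)
  have b3 := le_abs_self (m + ξ / 2 - (μ + φ) + 2 * π * k)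
  have b4 := neg_le_abs (m + ξ / 2 - (μ + φ) + 2 * π * k)
  have hnk : n = k := by
    by_contra hne
    rcases lt_or_gt_of_ne hne with hlt | hlt
    · have : (n:ℝ) + 1 ≤ k := by exact_mod_cast hlt
      nlinarith
    · have : (k:ℝ) + 1 ≤ n := by exact_mod_cast hlt
      nlinarith
  subst hnk
  refine ⟨?_, by linarith⟩
  refine lt_of_le_of_lt (arcDist_le m μ n) ?_
  rw [abs_lt]
  constructor <;> linarith

lemma core_second {m μ ξ φ ρ t : ℝ} (hφ0 : 0 ≤ φ) (hφ : φ ≤ π / 2) (hρ : ρ ≤ t) (ht : 0 ≤ t)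
    (h1 : t ≤ ξ) (h2 : ξ ≤ 2 * π - t)
    (h : arcDist (m - ξ / 2) (μ + φ) + arcDist (m + ξ / 2) (μ - φ) < ρ) :
    arcDist m (μ + π) < ρ / 2 ∧ 2 * π - ξ - 2 * φ < ρ := by
  have hpi := Real.pi_pos
  obtain ⟨n, hn⟩ := arcDist_attain (m - ξ / 2) (μ + φ)
  obtain ⟨k, hk⟩ := arcDist_attain (m + ξ / 2) (μ - φ)
  rw [hn, hk] at h
  have b1 := le_abs_self (m - ξ / 2 - (μ + φ) + 2 * π * n)
  have b2 := neg_le_abs (m - ξ / 2 - (μ + φ) + 2 * π * n)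
  have b3 := le_abs_self (m + ξ / 2 - (μ - φ) + 2 * π * k)
  have b4 := neg_le_abs (m + ξ / 2 - (μ - φ) + 2 * π * k)
  have hnk : n = k + 1 := by
    by_contra hne
    rcases lt_or_gt_of_ne hne with hlt | hlt
    · have : (n:ℝ) ≤ k := by exact_mod_cast (by omega : n ≤ k)
      nlinarith
    · have : (k:ℝ) + 2 ≤ n := by exact_mod_cast (by omega : k + 2 ≤ n)
      nlinarith
  subst hnk
  push_cast at *
  refine ⟨?_, by linarith⟩
  refine lt_of_le_of_lt (arcDist_le m (μ + π) (k + 1)) ?_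
  push_cast
  rw [abs_lt]
  constructor <;> linarith

lemma cov_core {i : ℝ × ℝ} {m ξ ρ t : ℝ} (hρ : ρ ≤ t) (ht : 0 ≤ t) (htpi : t ≤ π)
    (h1 : t ≤ ξ) (h2 : ξ ≤ 2 * π - t) (h : Cov i (m - ξ / 2) (m + ξ / 2) ρ) :
    (arcDist m (mid i) < ρ / 2 ∧ ξ - 2 * hs i < ρ) ∨
      (arcDist m (mid i + π) < ρ / 2 ∧ 2 * π - ξ - 2 * hs i < ρ) := by
  rcases mid_spec i with hm | hm <;> rcases h with h | h <;>
    rw [(hm _).1, (hm _).2] at h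
  · exact Or.inl (core_first (hs_nonneg i) (hs_le i) hρ htpi h1 h2 h)
  · exact Or.inr (core_second (hs_nonneg i) (hs_le i) hρ ht h1 h2 h)
  · exact Or.inr (core_second (hs_nonneg i) (hs_le i) hρ ht h1 h2 h)
  · exact Or.inl (core_first (hs_nonneg i) (hs_le i) hρ htpi h1 h2 h)

/-! ### Measure of covered sets -/

lemma volume_arc_le (s c R : ℝ) :
    volume (Set.Ioc s (s + 2 * π) ∩ {x | arcDist x c < R / 2}) ≤ ENNReal.ofReal R := by
  haveI : Fact (0 < 2 * π) := ⟨by positivity⟩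
  have hmp := AddCircle.measurePreserving_mk (2 * π) s
  have hmeas : MeasurableSet (Metric.closedBall ((c : ℝ) : AddCircle (2 * π)) (R / 2)) :=
    Metric.isClosed_closedBall.measurableSet
  have h1 := hmp.measure_preimage hmeas.nullMeasurableSet
  rw [AddCircle.volume_closedBall] at h1
  have h2 : volume (Set.Ioc s (s + 2 * π) ∩ {x | arcDist x c < R / 2}) ≤
      (volume.restrict (Set.Ioc s (s + 2 * π)))
        ((fun x : ℝ => (x : AddCircle (2 * π))) ⁻¹'
          (Metric.closedBall ((c : ℝ) : AddCircle (2 * π)) (R / 2))) := by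
    rw [Measure.restrict_apply' measurableSet_Ioc]
    refine measure_mono ?_
    rintro x ⟨hx, hxc⟩
    refine ⟨?_, hx⟩
    obtain ⟨n, hn⟩ := arcDist_attain x c
    simp only [Set.mem_setOf_eq] at hxc
    rw [hn] at hxc
    simp only [Set.mem_preimage, Metric.mem_closedBall, dist_eq_norm]
    have e : ((x : AddCircle (2 * π)) - (c : AddCircle (2 * π))) =
        ((x - c + 2 * π * n : ℝ) : AddCircle (2 * π)) := by
      have : ((2 * π * n : ℝ) : AddCircle (2 * π)) = 0 := by
        rw [AddCircle.coe_eq_zero_iff]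
        exact ⟨n, by simp [mul_comm]⟩
      push_cast
      rw [AddCircle.coe_add, this, AddCircle.coe_sub, add_zero]
    rw [e]
    exact (QuotientAddGroup.norm_mk_le_norm).trans hxc.le
  refine h2.trans ?_
  rw [h1]
  refine ENNReal.ofReal_le_ofReal ?_
  refine (min_le_right _ _).trans (le_of_eq ?_)
  ring

lemma cover_interval {κ : Type*} (J : Finset κ) (c R : κ → ℝ) (s ℓ : ℝ) (hR : ∀ j ∈ J, 0 ≤ R j)
    (hℓ : ℓ ≤ 2 * π)
    (hcov : ∀ m, s ≤ m → m ≤ s + ℓ → ∃ j ∈ J, arcDist m (c j) < R j / 2) :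
    ℓ ≤ ∑ j ∈ J, R j := by
  have h1 : Set.Ioc s (s + ℓ) ⊆
      ⋃ j ∈ J, (Set.Ioc s (s + 2 * π) ∩ {x | arcDist x (c j) < R j / 2}) := by
    intro m hm
    obtain ⟨j, hj, h⟩ := hcov m hm.1.le hm.2
    simp only [Set.mem_iUnion]
    exact ⟨j, hj, ⟨hm.1, by linarith [hm.2]⟩, h⟩
  have h2 : volume (Set.Ioc s (s + ℓ)) ≤ ∑ j ∈ J, ENNReal.ofReal (R j) := by
    refine (measure_mono h1).trans ((measure_biUnion_finset_le _ _).trans ?_)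
    exact Finset.sum_le_sum fun j _ => volume_arc_le s (c j) (R j)
  rw [Real.volume_Ioc, ← ENNReal.ofReal_sum_of_nonneg hR] at h2
  have h3 := (ENNReal.ofReal_le_ofReal_iff (Finset.sum_nonneg hR)).1 h2
  linarith

/-- Full covering of the circle by arcs around `mid i` (width `R₁ i`) and `mid i + π`
(width `R₂ i`). -/
lemma cover_circle (S : Finset (ℝ × ℝ)) (R₁ R₂ : ℝ × ℝ → ℝ)
    (h1 : ∀ i ∈ S, 0 ≤ R₁ i) (h2 : ∀ i ∈ S, 0 ≤ R₂ i)
    (hcov : ∀ m, ∃ i ∈ S, arcDist m (mid i) < R₁ i / 2 ∨ arcDist m (mid i + π) < R₂ i / 2) :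
    2 * π ≤ ∑ i ∈ S, (R₁ i + R₂ i) := by
  have := cover_interval (S ×ˢ (Finset.univ : Finset Bool))
    (fun x => if x.2 then mid x.1 else mid x.1 + π) (fun x => if x.2 then R₁ x.1 else R₂ x.1)
    0 (2 * π) ?_ le_rfl ?_
  · rw [Finset.sum_product] at this
    simpa using this
  · rintro ⟨i, b⟩ hi
    simp only [Finset.mem_product, Finset.mem_univ, and_true] at hi
    cases b
    · simpa using h2 i hi
    · simpa using h1 i hi
  · intro m _ _
    obtain ⟨i, hi, h | h⟩ := hcov m
    · exact ⟨(i, true), by simpa using hi, by simpa using h⟩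
    · exact ⟨(i, false), by simpa using hi, by simpa using h⟩

/-! ### Numerical estimates -/

/-- Complementary half span. -/
noncomputable def yy (i : ℝ × ℝ) : ℝ := π / 2 - hs i

lemma yy_nonneg (i : ℝ × ℝ) : 0 ≤ yy i := by
  have := hs_le i
  unfold yy
  linarith

lemma yy_le (i : ℝ × ℝ) : yy i ≤ π / 2 := by
  have := hs_nonneg i
  unfold yy
  linarith

lemma hs_eq (i : ℝ × ℝ) : hs i = π / 2 - yy i := by
  unfold yy
  ring

lemma clen_ge (i : ℝ × ℝ) : 2 - yy i ^ 2 ≤ clen i := by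
  rw [clen_eq, hs_eq, Real.sin_pi_div_two_sub]
  have := Real.one_sub_sq_div_two_le_cos (x := yy i)
  linarith

lemma sav_hs (i : ℝ × ℝ) : sav i = 2 * hs i - clen i := by
  rw [sav_eq, clen_eq]

lemma sav_le (i : ℝ × ℝ) : sav i ≤ π - 2 := by
  have h1 := clen_ge i
  have h2 := yy_nonneg i
  have h3 := yy_le i
  have h4 := Real.pi_lt_d6
  rw [sav_hs, hs_eq]
  nlinarith

lemma sav_small {i : ℝ × ℝ} {X t κ : ℝ} (hX : clen i < X) (ht0 : 0 ≤ t) (ht : t ≤ 1)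
    (hXt : X / 2 ≤ t - t ^ 3 / 6) (hκ0 : 0 ≤ κ) (hκ : t ^ 2 / 6 ≤ κ * (1 - t ^ 2 / 6)) :
    sav i ≤ κ * clen i := by
  rw [sav_eq, clen_eq]
  rw [clen_eq] at hX
  have h0 := hs_nonneg i
  have h1 := hs_le i
  generalize hs i = φ at *
  have hpi := Real.pi_gt_three
  have hφt : φ ≤ t := by
    by_contra hc
    push Not at hc
    have e1 : Real.sin t ≤ Real.sin φ := Real.sin_le_sin_of_le_of_le_pi_div_two (by linarith) h1 hc.le
    have e2 := Real.sin_ge_sub_cube ht0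
    linarith
  have h2 := Real.sin_ge_sub_cube h0
  have h3 : φ ^ 3 / 6 ≤ t ^ 2 / 6 * φ := by
    have : φ ^ 2 ≤ t ^ 2 := by gcongr
    nlinarith
  have h4 : φ * (1 - t ^ 2 / 6) ≤ Real.sin φ := by linarith
  have h5 := mul_le_mul_of_nonneg_left h4 hκ0
  have h6 := mul_le_mul_of_nonneg_left hκ h0
  nlinarith

lemma extras {G : Finset (ℝ × ℝ)} {X t κ : ℝ} (hX : ∑ j ∈ G, clen j < X) (ht0 : 0 ≤ t) (ht : t ≤ 1)
    (hXt : X / 2 ≤ t - t ^ 3 / 6) (hκ0 : 0 ≤ κ) (hκ : t ^ 2 / 6 ≤ κ * (1 - t ^ 2 / 6)) :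
    ∑ j ∈ G, sav j ≤ κ * X := by
  have h1 : ∑ j ∈ G, sav j ≤ ∑ j ∈ G, κ * clen j := by
    refine Finset.sum_le_sum fun j hj => sav_small (X := X) ?_ ht0 ht hXt hκ0 hκ
    exact lt_of_le_of_lt (Finset.single_le_sum (fun k _ => clen_nonneg k) hj) hX
  rw [← Finset.mul_sum] at h1
  exact h1.trans (mul_le_mul_of_nonneg_left hX.le hκ0)

lemma all_short {F : Finset (ℝ × ℝ)} (hF : ∑ j ∈ F, clen j < π / 2 + 1)
    (hs : ∀ j ∈ F, clen j < 1.4) : ∑ j ∈ F, sav j ≤ 0.29 := by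
  have h1 : ∑ j ∈ F, sav j ≤ ∑ j ∈ F, 0.1126 * clen j := by
    refine Finset.sum_le_sum fun j hj =>
      sav_small (X := 1.4) (t := 0.779) (hs j hj) ?_ ?_ ?_ ?_ ?_ <;> norm_num
  rw [← Finset.mul_sum] at h1
  have := Real.pi_lt_d6
  linarith

lemma short_sav {j : ℝ × ℝ} (h : clen j < 1.4) : sav j ≤ 0.158 := by
  have := sav_small (X := 1.4) (t := 0.779) (κ := 0.1126) h (by norm_num) (by norm_num)
    (by norm_num) (by norm_num) (by norm_num)
  linarith

lemma tiny_sav {j : ℝ × ℝ} (h : clen j < 0.7004) : sav j ≤ 0.0154 := by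
  have := sav_small (X := 0.7004) (t := 0.3585) (κ := 0.0219) h (by norm_num) (by norm_num)
    (by norm_num) (by norm_num) (by norm_num)
  linarith

section
open Classical

variable {S : Finset (ℝ × ℝ)}

/-- The standing (to be refuted) hypothesis. -/
def Good (S : Finset (ℝ × ℝ)) : Prop :=
  ∀ p q : ℝ, ∃ L, Valid S L ∧ walkCost q p L < π / 2 + 1

lemma erase_sum {F : Finset (ℝ × ℝ)} {i : ℝ × ℝ} (hi : i ∈ F)
    (hF : ∑ j ∈ F, clen j < π / 2 + 1) : ∑ j ∈ F.erase i, clen j < π / 2 + 1 - clen i := by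
  have := Finset.add_sum_erase F clen hi
  linarith

lemma erase_short {F : Finset (ℝ × ℝ)} {i j : ℝ × ℝ} (hi : i ∈ F)
    (hF : ∑ j ∈ F, clen j < π / 2 + 1) (hl : 1.4 ≤ clen i) (hj : j ∈ F.erase i) :
    clen j < π / 2 + 1 - clen i ∧ clen j < 1.4 := by
  have h1 := erase_sum hi hF
  have h2 := Finset.single_le_sum (fun k _ => clen_nonneg k) hj
  have := Real.pi_lt_d6
  constructor <;> linarith

lemma long_extras {F : Finset (ℝ × ℝ)} {i : ℝ × ℝ} (hi : i ∈ F)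
    (hF : ∑ j ∈ F, clen j < π / 2 + 1) (hl : 1.4 ≤ clen i) :
    ∑ j ∈ F.erase i, sav j ≤ 0.0822 := by
  have h1 := erase_sum hi hF
  have hpi := Real.pi_lt_d6
  have := extras (G := F.erase i) (X := 1.1708) (t := 0.6269) (κ := 0.0702)
    (by linarith) (by norm_num) (by norm_num) (by norm_num) (by norm_num) (by norm_num)
  linarith

lemma big_extras {F : Finset (ℝ × ℝ)} {i : ℝ × ℝ} (hi : i ∈ F)
    (hF : ∑ j ∈ F, clen j < π / 2 + 1) (hl : yy i < 0.36) :
    ∑ j ∈ F.erase i, sav j ≤ 0.0154 := by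
  have h1 := erase_sum hi hF
  have h2 := clen_ge i
  have h3 := yy_nonneg i
  have hpi := Real.pi_lt_d6
  have := extras (G := F.erase i) (X := 0.7004) (t := 0.3585) (κ := 0.0219)
    (by nlinarith) (by norm_num) (by norm_num) (by norm_num) (by norm_num) (by norm_num)
  linarith

lemma big_long {i : ℝ × ℝ} (hl : yy i < 0.36) : 1.87 ≤ clen i := by
  have h2 := clen_ge i
  have h3 := yy_nonneg i
  nlinarith

lemma big_of_antipodal {F : Finset (ℝ × ℝ)} {i : ℝ × ℝ} (hi : i ∈ F)
    (hF : ∑ j ∈ F, clen j < π / 2 + 1) (hl : 1.4 ≤ clen i)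
    (h : π - 2 * hs i < π / 2 + 1 - clen i + ∑ j ∈ F.erase i, sav j) : yy i < 0.36 := by
  have h1 := erase_sum hi hF
  have h2 := clen_ge i
  have h3 := yy_nonneg i
  have h3' := yy_le i
  have hpi := Real.pi_lt_d6
  have e1 := long_extras hi hF hl
  rw [hs_eq] at h
  have hy : yy i < 0.4110 := by
    by_contra hc
    push Not at hc
    nlinarith
  have := extras (G := F.erase i) (X := 0.74) (t := 0.3795) (κ := 0.0247)
    (by nlinarith) (by norm_num) (by norm_num) (by norm_num) (by norm_num) (by norm_num)
  by_contra hc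
  push Not at hc
  nlinarith

/-- Information on the pair of points at distance `ξ` centred at `m`. -/
lemma level (hG : Good S) (m ξ : ℝ) (h1 : π / 2 + 1 ≤ ξ) (h2 : ξ ≤ π) :
    ∃ L : List (ℝ × ℝ), ∃ F : Finset (ℝ × ℝ), Valid S L ∧
      walkCost (m + ξ / 2) (m - ξ / 2) L < π / 2 + 1 ∧
      (L.map (key S)).Nodup ∧ F = (L.map (key S)).toFinset ∧ F ⊆ S ∧
      ∑ i ∈ F, clen i < π / 2 + 1 ∧ ξ < π / 2 + 1 + ∑ i ∈ F, sav i ∧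
      ∀ i ∈ F, ∀ ρ, π / 2 + 1 - clen i + ∑ j ∈ F.erase i, sav j ≤ ρ → ρ ≤ π / 2 + 1 →
        (arcDist m (mid i) < ρ / 2 ∧ ξ - 2 * hs i < ρ) ∨
        (arcDist m (mid i + π) < ρ / 2 ∧ 2 * π - ξ - 2 * hs i < ρ) := by
  have hpi := Real.pi_gt_three
  obtain ⟨L₀, hL₀, hc₀⟩ := hG (m - ξ / 2) (m + ξ / 2)
  obtain ⟨L, F, a1, a2, a3, a4, a5, a6, a7, a8⟩ := walk_pack S _ _ _ L₀ hL₀ hc₀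
  refine ⟨L, F, a1, a2, a3, a4, a5, a6, ?_, ?_⟩
  · have : ξ ≤ arcDist (m - ξ / 2) (m + ξ / 2) := by
      rw [arcDist_comm]
      exact le_arcDist (by linarith) (by linarith)
    linarith
  · intro i hi ρ h hρ
    refine cov_core hρ (by linarith) (by linarith) h1 (by linarith) ?_
    rcases a8 i hi with h' | h'
    · exact Or.inl (lt_of_lt_of_le h' h)
    · exact Or.inr (lt_of_lt_of_le h' h)

lemma level_long {F : Finset (ℝ × ℝ)} {ξ : ℝ} (hF : ∑ i ∈ F, clen i < π / 2 + 1)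
    (h : ξ < π / 2 + 1 + ∑ i ∈ F, sav i) (hξ : π / 2 + 1 + 0.29 ≤ ξ) :
    ∃ i ∈ F, 1.4 ≤ clen i := by
  by_contra hc
  push Not at hc
  have := all_short hF hc
  linarith

/-- The big chords. -/
noncomputable def Bg (S : Finset (ℝ × ℝ)) : Finset (ℝ × ℝ) := S.filter (fun i => yy i < 0.36)

lemma mem_Bg {i : ℝ × ℝ} : i ∈ Bg S ↔ i ∈ S ∧ yy i < 0.36 := by
  unfold Bg
  exact Finset.mem_filter

/-- The short chords. -/
noncomputable def Sh (S : Finset (ℝ × ℝ)) : Finset (ℝ × ℝ) := S.filter (fun i => clen i < 1.4)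

lemma mem_Sh {i : ℝ × ℝ} : i ∈ Sh S ↔ i ∈ S ∧ clen i < 1.4 := by
  unfold Sh
  exact Finset.mem_filter

lemma disj_Bg_Sh : Disjoint (Bg S) (Sh S) := by
  rw [Finset.disjoint_left]
  intro i h1 h2
  have := big_long (mem_Bg.1 h1).2
  have := (mem_Sh.1 h2).2
  linarith

lemma Bg_subset : Bg S ⊆ S := Finset.filter_subset _ _

lemma Sh_subset : Sh S ⊆ S := Finset.filter_subset _ _

/-- The antipodal inequality. -/
lemma antipodal (hG : Good S) (W : ℝ × ℝ → ℝ) (hW0 : ∀ i ∈ Bg S, 0 ≤ W i)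
    (hW2 : ∀ i ∈ Bg S, W i ≤ π / 2 + 1)
    (hW : ∀ F ⊆ S, ∑ i ∈ F, clen i < π / 2 + 1 → ∀ i ∈ F, i ∈ Bg S →
      π / 2 + 1 - clen i + ∑ j ∈ F.erase i, sav j ≤ W i) :
    2 * π ≤ ∑ i ∈ Bg S, (W i + W i) := by
  refine cover_circle (Bg S) W W hW0 hW0 ?_
  intro m
  have hpi := Real.pi_gt_d6
  have hpi' := Real.pi_lt_d6
  obtain ⟨L, F, -, -, -, -, a5, a6, a7, a8⟩ := level hG m π (by linarith) le_rfl
  obtain ⟨i, hi, hl⟩ := level_long a6 a7 (by linarith)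
  have hE := long_extras hi a6 hl
  have hB : i ∈ Bg S := by
    refine mem_Bg.2 ⟨a5 hi, ?_⟩
    rcases a8 i hi _ le_rfl (by linarith) with ⟨_, h⟩ | ⟨_, h⟩
    · exact big_of_antipodal hi a6 hl h
    · exact big_of_antipodal hi a6 hl (by linarith)
  refine ⟨i, hB, ?_⟩
  rcases a8 i hi (W i) (hW F a5 a6 i hi hB) (hW2 i hB) with ⟨h, _⟩ | ⟨h, _⟩
  · exact Or.inl h
  · exact Or.inr h

lemma big_W {F : Finset (ℝ × ℝ)} {i : ℝ × ℝ} (hi : i ∈ F)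
    (hF : ∑ j ∈ F, clen j < π / 2 + 1) (hl : yy i < 0.36) :
    π / 2 + 1 - clen i + ∑ j ∈ F.erase i, sav j ≤ 0.72 := by
  have h1 := big_extras hi hF hl
  have h2 := clen_ge i
  have h3 := yy_nonneg i
  have hpi := Real.pi_lt_d6
  nlinarith

lemma card_Bg (hG : Good S) : 5 ≤ (Bg S).card := by
  have hpi := Real.pi_gt_d6
  have h := antipodal hG (fun _ => 0.72) (by intros; norm_num) (by intros; linarith)
    (fun F _ hF i hi hB => big_W hi hF (mem_Bg.1 hB).2)
  simp only [Finset.sum_const, nsmul_eq_mul] at h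
  by_contra hc
  have : ((Bg S).card : ℝ) ≤ 4 := by exact_mod_cast (by omega : (Bg S).card ≤ 4)
  linarith

/-- At distance exactly `π/2+1`, the second orientation is useless without extras. -/
lemma no_second {i : ℝ × ℝ} (h : 2 * π - (π / 2 + 1) - 2 * hs i < π / 2 + 1 - clen i) : False := by
  have := sav_le i
  rw [sav_hs] at this
  linarith

lemma sum_two {B : Finset (ℝ × ℝ)} (hB : B ⊆ S) (a b : ℝ) :
    ∑ i ∈ S, (if i ∈ B then a else b) = a * B.card + b * (S.card - B.card) := by
  have h : ∀ i ∈ S, (if i ∈ B then a else b) = b + (if i ∈ B then (a - b) else 0) := by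
    intro i _
    split_ifs <;> ring
  rw [Finset.sum_congr rfl h, Finset.sum_add_distrib, Finset.sum_ite_mem,
    Finset.inter_eq_right.2 hB]
  simp only [Finset.sum_const, nsmul_eq_mul]
  ring

lemma case_no_short (hcard : S.card = 7) (hG : Good S) (h0 : (Sh S).card = 0) : False := by
  have hpi := Real.pi_gt_d6
  have hpi' := Real.pi_lt_d6
  have hlong : ∀ i ∈ S, 1.4 ≤ clen i := by
    intro i hi
    by_contra hc
    push Not at hc
    have : i ∈ Sh S := mem_Sh.2 ⟨hi, hc⟩
    rw [Finset.card_eq_zero] at h0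
    simp [h0] at this
  have hW : ∀ i ∈ S, π / 2 + 1 - clen i ≤ if i ∈ Bg S then 0.72 else 1.171 := by
    intro i hi
    split_ifs with hB
    · have := big_long (mem_Bg.1 hB).2
      linarith
    · have := hlong i hi
      linarith
  have hcov := cover_circle S (fun i => if i ∈ Bg S then 0.72 else 1.171) (fun _ => 0)
    (by intro i _; split_ifs <;> norm_num) (by intros; norm_num) ?_
  · simp only [add_zero] at hcov
    have h5 := card_Bg hG
    have h5' : (5:ℝ) ≤ (Bg S).card := by exact_mod_cast h5
    rw [sum_two Bg_subset, hcard] at hcov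
    norm_num at hcov
    linarith
  · intro m
    obtain ⟨L, F, -, -, -, -, a5, a6, a7, a8⟩ := level hG m (π / 2 + 1) le_rfl (by linarith)
    have hne : F.Nonempty := by
      by_contra hc
      rw [Finset.not_nonempty_iff_eq_empty] at hc
      simp [hc] at a7
    obtain ⟨i, hi⟩ := hne
    have hl := hlong i (a5 hi)
    have hempty : F.erase i = ∅ := by
      by_contra hc
      obtain ⟨j, hj⟩ := Finset.nonempty_iff_ne_empty.2 hc
      have h1 := (erase_short hi a6 hl hj).2
      have h2 := hlong j (a5 (Finset.mem_of_mem_erase hj))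
      linarith
    refine ⟨i, a5 hi, Or.inl ?_⟩
    have := a8 i hi (π / 2 + 1 - clen i) (by rw [hempty]; simp) (by linarith)
    rcases this with ⟨h, _⟩ | ⟨_, h⟩
    · have := hW i (a5 hi)
      linarith
    · exact (no_second h).elim

end

section
open Classical

variable {S : Finset (ℝ × ℝ)}

lemma case_two (hcard : S.card = 7) (hG : Good S) (h2 : (Sh S).card = 2) : False := by
  have hpi := Real.pi_gt_d6
  have hpi' := Real.pi_lt_d6
  have h5 := card_Bg hG
  have hun : (Bg S ∪ Sh S).card = (Bg S).card + (Sh S).card :=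
    Finset.card_union_of_disjoint disj_Bg_Sh
  have hsub : Bg S ∪ Sh S ⊆ S := Finset.union_subset Bg_subset Sh_subset
  have hle := Finset.card_le_card hsub
  have hcB : (Bg S).card = 5 := by omega
  have heq : Bg S ∪ Sh S = S := Finset.eq_of_subset_of_card_le hsub (by omega)
  have hlong : ∀ i ∈ S, 1.4 ≤ clen i → i ∈ Bg S := by
    intro i hi hl
    rw [← heq, Finset.mem_union] at hi
    rcases hi with h | h
    · exact h
    · have := (mem_Sh.1 h).2
      linarith
  have hcov := cover_circle (Bg S) (fun i => if yy i < 0.1666 then 0.614 else 0.72)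
    (fun i => if yy i < 0.1666 then 0.614 else 0)
    (by intro i _; split_ifs <;> norm_num) (by intro i _; split_ifs <;> norm_num) ?_
  · have hb : ∑ i ∈ Bg S, ((if yy i < 0.1666 then (0.614 : ℝ) else 0.72) +
        (if yy i < 0.1666 then (0.614 : ℝ) else 0)) ≤ ∑ i ∈ Bg S, (1.228 : ℝ) := by
      refine Finset.sum_le_sum fun i _ => ?_
      split_ifs <;> norm_num
    rw [Finset.sum_const, hcB] at hb
    norm_num at hb hcov
    linarith
  · intro m
    obtain ⟨L, F, -, -, -, -, a5, a6, a7, a8⟩ :=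
      level hG m (π / 2 + 1 + 0.29) (by linarith) (by linarith)
    obtain ⟨i, hi, hl⟩ := level_long a6 a7 le_rfl
    have hB := hlong i (a5 hi) hl
    have hy := (mem_Bg.1 hB).2
    have hE := big_extras hi a6 hy
    have hW := big_W hi a6 hy
    have hcl := clen_ge i
    have hy0 := yy_nonneg i
    refine ⟨i, hB, ?_⟩
    by_cases hn : yy i < 0.1666
    · simp only [hn, if_true]
      rcases a8 i hi 0.614 (by nlinarith) (by linarith) with ⟨h, _⟩ | ⟨h, _⟩
      · exact Or.inl h
      · exact Or.inr h
    · simp only [hn, if_false]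
      rcases a8 i hi _ le_rfl (by linarith) with ⟨h, _⟩ | ⟨_, h⟩
      · exact Or.inl (by linarith)
      · exfalso
        rw [hs_eq] at h
        push Not at hn
        nlinarith

/-- Data of the case with exactly one short chord. -/
structure OneShort (S : Finset (ℝ × ℝ)) (c : ℝ × ℝ) : Prop where
  good : Good S
  card : S.card = 7
  mem : c ∈ S
  short : clen c < 1.4
  long : ∀ i ∈ S, i ≠ c → 1.4 ≤ clen i

lemma exists_one (hcard : S.card = 7) (hG : Good S) (h1 : (Sh S).card = 1) : ∃ c, OneShort S c := by
  obtain ⟨c, hc⟩ := Finset.card_eq_one.1 h1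
  have hcm : c ∈ Sh S := by rw [hc]; exact Finset.mem_singleton_self c
  refine ⟨c, hG, hcard, (mem_Sh.1 hcm).1, (mem_Sh.1 hcm).2, ?_⟩
  intro i hi hne
  by_contra h
  push Not at h
  have : i ∈ Sh S := mem_Sh.2 ⟨hi, h⟩
  rw [hc] at this
  exact hne (Finset.mem_singleton.1 this)

/-- Possible gain from the short chord when combined with a big chord. -/
noncomputable def ee (c : ℝ × ℝ) : ℝ := if clen c < 0.7004 then sav c else 0

lemma ee_nonneg (c : ℝ × ℝ) : 0 ≤ ee c := by
  unfold ee
  split_ifs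
  · exact sav_nonneg c
  · exact le_rfl

lemma ee_le (c : ℝ × ℝ) : ee c ≤ 0.0154 := by
  unfold ee
  split_ifs with h
  · exact tiny_sav h
  · norm_num

/-- The second orientation is conceivable. -/
def Near (c i : ℝ × ℝ) : Prop :=
  2 * π - (π / 2 + 1 + sav c) - 2 * hs i < π / 2 + 1 - clen i + ee c

/-- Width bound. -/
noncomputable def WW (c i : ℝ × ℝ) : ℝ := if Near c i then 0.59 else 0.72

lemma WW_ge (c i : ℝ × ℝ) : 0.59 ≤ WW c i := by
  unfold WW
  split_ifs <;> norm_num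

lemma WW_le (c i : ℝ × ℝ) : WW c i ≤ 0.72 := by
  unfold WW
  split_ifs <;> norm_num

lemma le_WW {c i : ℝ × ℝ} (hc : clen c < 1.4) (hi : yy i < 0.36) :
    π / 2 + 1 - clen i + ee c ≤ WW c i := by
  have hpi := Real.pi_gt_d6
  have hpi' := Real.pi_lt_d6
  have h1 := clen_ge i
  have h2 := yy_nonneg i
  have h3 := ee_le c
  unfold WW
  split_ifs with hn
  · unfold Near at hn
    rw [hs_eq] at hn
    unfold ee at hn h3 ⊢
    split_ifs at hn h3 ⊢ with ht
    · have hy : yy i < 0.0156 := by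
        by_contra h
        push Not at h
        nlinarith
      nlinarith
    · have := short_sav hc
      have hy : yy i < 0.083 := by
        by_contra h
        push Not at h
        nlinarith
      nlinarith
  · nlinarith

lemma OneShort.erase_subset {c i : ℝ × ℝ} (H : OneShort S c) {F : Finset (ℝ × ℝ)} (hF : F ⊆ S)
    (hs : ∑ j ∈ F, clen j < π / 2 + 1) (hi : i ∈ F) (hl : 1.4 ≤ clen i) :
    ∀ j ∈ F.erase i, j = c := by
  intro j hj
  by_contra hne
  have h1 := (erase_short hi hs hl hj).2
  have h2 := H.long j (hF (Finset.mem_of_mem_erase hj)) hne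
  linarith

lemma OneShort.erase_ee {c i : ℝ × ℝ} (H : OneShort S c) {F : Finset (ℝ × ℝ)} (hF : F ⊆ S)
    (hs : ∑ j ∈ F, clen j < π / 2 + 1) (hi : i ∈ F) (hy : yy i < 0.36) :
    ∑ j ∈ F.erase i, sav j ≤ ee c := by
  have hpi' := Real.pi_lt_d6
  have hl := big_long hy
  have hsub := H.erase_subset hF hs hi (by linarith)
  by_cases hc : c ∈ F.erase i
  · have h1 := (erase_short hi hs (by linarith) hc).1
    have heq : F.erase i = {c} := by
      ext j
      rw [Finset.mem_singleton]
      exact ⟨hsub j, fun h => h ▸ hc⟩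
    have hcl := clen_ge i
    have hy0 := yy_nonneg i
    have ht : clen c < 0.7004 := by nlinarith
    rw [heq, Finset.sum_singleton]
    unfold ee
    rw [if_pos ht]
  · have heq : F.erase i = ∅ := by
      rw [Finset.eq_empty_iff_forall_notMem]
      intro j hj
      exact hc (hsub j hj ▸ hj)
    rw [heq, Finset.sum_empty]
    exact ee_nonneg c

/-- The near chords. -/
noncomputable def Nr (S : Finset (ℝ × ℝ)) (c : ℝ × ℝ) : Finset (ℝ × ℝ) :=
  (Bg S).filter (fun i => Near c i)

lemma mem_Nr {c i : ℝ × ℝ} : i ∈ Nr S c ↔ i ∈ Bg S ∧ Near c i := by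
  unfold Nr
  exact Finset.mem_filter

lemma Nr_subset {c : ℝ × ℝ} : Nr S c ⊆ Bg S := Finset.filter_subset _ _

lemma sum_WW (c : ℝ × ℝ) :
    ∑ i ∈ Bg S, WW c i = 0.72 * (Bg S).card - 0.13 * (Nr S c).card := by
  have h : ∀ i ∈ Bg S, WW c i = if i ∈ Nr S c then 0.59 else 0.72 := by
    intro i hi
    unfold WW
    simp only [mem_Nr, hi, true_and]
  rw [Finset.sum_congr rfl h, sum_two Nr_subset]
  ring

lemma OneShort.antip {c : ℝ × ℝ} (H : OneShort S c) :
    π ≤ 0.72 * (Bg S).card - 0.13 * (Nr S c).card := by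
  have hpi := Real.pi_gt_d6
  have h := antipodal H.good (WW c) (fun i _ => by linarith [WW_ge c i])
    (fun i _ => by linarith [WW_le c i]) (fun F hF hs i hi hB => by
      have h1 := H.erase_ee hF hs hi (mem_Bg.1 hB).2
      have h2 := le_WW H.short (mem_Bg.1 hB).2
      linarith)
  rw [Finset.sum_add_distrib, sum_WW] at h
  linarith

lemma OneShort.not_big {c : ℝ × ℝ} (H : OneShort S c) : c ∉ Bg S := by
  intro h
  have := big_long (mem_Bg.1 h).2
  have := H.short
  linarith

lemma OneShort.near_count {c : ℝ × ℝ} (H : OneShort S c) :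
    2 * π ≤ 1.26 * 6 - 0.54 * (Bg S).card + 0.46 * (Nr S c).card := by
  have hpi := Real.pi_gt_d6
  have hpi' := Real.pi_lt_d6
  have hsc := short_sav H.short
  have hsc0 := sav_nonneg c
  have hBs : Bg S ⊆ S.erase c := by
    intro i hi
    refine Finset.mem_erase.2 ⟨?_, Bg_subset hi⟩
    rintro rfl
    exact H.not_big hi
  have hcov := cover_circle (S.erase c) (fun i => if i ∈ Bg S then WW c i else 1.26)
    (fun i => if i ∈ Nr S c then 0.59 else 0)
    (by intro i _; split_ifs <;> linarith [WW_ge c i])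
    (by intro i _; split_ifs <;> norm_num) ?_
  · have h : ∀ i ∈ S.erase c, ((if i ∈ Bg S then WW c i else 1.26) +
        (if i ∈ Nr S c then (0.59 : ℝ) else 0)) =
        (if i ∈ Bg S then (0.72 : ℝ) else 1.26) + (if i ∈ Nr S c then (0.46 : ℝ) else 0) := by
      intro i _
      by_cases hB : i ∈ Bg S
      · by_cases hn : Near c i
        · simp only [mem_Nr, hB, hn, WW]
          norm_num
        · simp only [mem_Nr, hB, hn, WW]
          norm_num
      · have : i ∉ Nr S c := fun h => hB (Nr_subset h)
        simp only [hB, this, if_false]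
    have hcS : ((S.erase c).card : ℝ) = 6 := by
      rw [Finset.card_erase_of_mem H.mem, H.card]
      norm_num
    rw [Finset.sum_congr rfl h, Finset.sum_add_distrib, sum_two hBs,
      sum_two (Nr_subset.trans hBs), hcS] at hcov
    linarith
  · intro m
    obtain ⟨L, F, -, -, -, -, a5, a6, a7, a8⟩ :=
      level H.good m (π / 2 + 1 + sav c) (by linarith) (by linarith)
    have hex : ∃ i ∈ F, i ≠ c := by
      by_contra hc
      push Not at hc
      have hsub : F ⊆ {c} := fun i hi => Finset.mem_singleton.2 (hc i hi)
      have := Finset.sum_le_sum_of_subset_of_nonneg (f := sav) hsub (fun i _ _ => sav_nonneg i)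
      rw [Finset.sum_singleton] at this
      linarith
    obtain ⟨i, hi, hne⟩ := hex
    have hl := H.long i (a5 hi) hne
    refine ⟨i, Finset.mem_erase.2 ⟨hne, a5 hi⟩, ?_⟩
    by_cases hB : i ∈ Bg S
    · have hy := (mem_Bg.1 hB).2
      have h1 := H.erase_ee a5 a6 hi hy
      have h2 := le_WW H.short hy
      have h3 := WW_le c i
      rcases a8 i hi (π / 2 + 1 - clen i + ee c) (by linarith) (by linarith) with ⟨h, _⟩ | ⟨h, hn⟩
      · left
        rw [if_pos hB]
        linarith
      · right
        have hN : Near c i := hn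
        rw [if_pos (mem_Nr.2 ⟨hB, hN⟩)]
        have : WW c i = 0.59 := by unfold WW; rw [if_pos hN]
        linarith
    · have h1 := long_extras hi a6 hl
      rcases a8 i hi _ le_rfl (by linarith) with ⟨h, _⟩ | ⟨h, hn⟩
      · left
        rw [if_neg hB]
        linarith
      · exfalso
        have hy : 0.36 ≤ yy i := by
          by_contra hy
          push Not at hy
          exact hB (mem_Bg.2 ⟨a5 hi, hy⟩)
        have hy2 := yy_le i
        have hcl := clen_ge i
        rw [hs_eq] at hn
        nlinarith

lemma OneShort.counts {c : ℝ × ℝ} (H : OneShort S c) : (∀ i ∈ S, i ≠ c → i ∈ Bg S) ∧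
    ∑ i ∈ Bg S, WW c i ≤ 3.67 := by
  have hpi := Real.pi_gt_d6
  have hpi' := Real.pi_lt_d6
  have h5 := card_Bg H.good
  have hBs : Bg S ⊆ S.erase c := by
    intro i hi
    refine Finset.mem_erase.2 ⟨?_, Bg_subset hi⟩
    rintro rfl
    exact H.not_big hi
  have hcS : (S.erase c).card = 6 := by
    rw [Finset.card_erase_of_mem H.mem, H.card]
  have h6 := Finset.card_le_card hBs
  have hA := H.antip
  have hN := H.near_count
  have hb : (Bg S).card = 5 ∨ (Bg S).card = 6 := by omega
  rcases hb with hb | hb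
  · exfalso
    rw [hb] at hA hN
    norm_num at hA hN
    have hn : (Nr S c).card ≤ 3 ∨ 4 ≤ (Nr S c).card := by omega
    rcases hn with hn | hn
    · have : ((Nr S c).card : ℝ) ≤ 3 := by exact_mod_cast hn
      linarith
    · have : (4 : ℝ) ≤ (Nr S c).card := by exact_mod_cast hn
      linarith
  · have heq : Bg S = S.erase c := Finset.eq_of_subset_of_card_le hBs (by omega)
    constructor
    · intro i hi hne
      rw [heq]
      exact Finset.mem_erase.2 ⟨hne, hi⟩
    · rw [sum_WW]
      rw [hb] at hN ⊢
      norm_num at hN ⊢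
      have hn : (Nr S c).card ≤ 4 ∨ 5 ≤ (Nr S c).card := by omega
      rcases hn with hn | hn
      · have : ((Nr S c).card : ℝ) ≤ 4 := by exact_mod_cast hn
        linarith
      · have : (5 : ℝ) ≤ (Nr S c).card := by exact_mod_cast hn
        linarith

lemma OneShort.not_medium {c : ℝ × ℝ} (H : OneShort S c) (hm : 0.7004 ≤ clen c) : False := by
  have hpi := Real.pi_gt_d6
  have hpi' := Real.pi_lt_d6
  obtain ⟨hall, hsum⟩ := H.counts
  have he : ee c = 0 := by
    unfold ee
    rw [if_neg (by linarith)]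
  have hcov := cover_circle S (fun i => if i ∈ Bg S then WW c i else 1.8705) (fun _ => 0)
    (by intro i _; split_ifs <;> linarith [WW_ge c i]) (by intros; norm_num) ?_
  · simp only [add_zero] at hcov
    have hB : Bg S = S.erase c := by
      ext i
      refine ⟨fun hi => Finset.mem_erase.2 ⟨?_, Bg_subset hi⟩, fun hi => ?_⟩
      · rintro rfl
        exact H.not_big hi
      · exact hall i (Finset.mem_of_mem_erase hi) (Finset.ne_of_mem_erase hi)
    rw [← Finset.add_sum_erase S _ H.mem, if_neg H.not_big, ← hB] at hcov
    have : ∑ i ∈ Bg S, (if i ∈ Bg S then WW c i else 1.8705) = ∑ i ∈ Bg S, WW c i := by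
      refine Finset.sum_congr rfl fun i hi => ?_
      rw [if_pos hi]
    rw [this] at hcov
    linarith
  · intro m
    obtain ⟨L, F, -, -, -, -, a5, a6, a7, a8⟩ := level H.good m (π / 2 + 1) le_rfl (by linarith)
    by_cases hex : ∃ i ∈ F, i ≠ c
    · obtain ⟨i, hi, hne⟩ := hex
      have hB := hall i (a5 hi) hne
      have hy := (mem_Bg.1 hB).2
      have h1 := H.erase_ee a5 a6 hi hy
      have h2 := le_WW H.short hy
      have h3 := WW_le c i
      rw [he] at h1 h2
      refine ⟨i, a5 hi, Or.inl ?_⟩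
      rcases a8 i hi (π / 2 + 1 - clen i) (by linarith) (by linarith) with ⟨h, _⟩ | ⟨h, hn⟩
      · rw [if_pos hB]
        linarith
      · exact (no_second hn).elim
    · push Not at hex
      have hcF : c ∈ F := by
        by_contra hc
        have : F = ∅ := by
          rw [Finset.eq_empty_iff_forall_notMem]
          intro i hi
          exact hc (hex i hi ▸ hi)
        rw [this] at a7
        simp at a7
      have hem : F.erase c = ∅ := by
        rw [Finset.eq_empty_iff_forall_notMem]
        intro i hi
        exact Finset.ne_of_mem_erase hi (hex i (Finset.mem_of_mem_erase hi))
      refine ⟨c, H.mem, Or.inl ?_⟩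
      rcases a8 c hcF (π / 2 + 1 - clen c) (by rw [hem]; simp) (by linarith) with ⟨h, _⟩ | ⟨h, hn⟩
      · rw [if_neg H.not_big]
        linarith
      · exact (no_second hn).elim

end

section
open Classical

variable {S : Finset (ℝ × ℝ)}

lemma hs_le_clen (c : ℝ × ℝ) : hs c ≤ clen c := by
  rw [clen_eq]
  have h0 := hs_nonneg c
  have h1 := Real.mul_le_sin h0 (hs_le c)
  have hpi := Real.pi_lt_d6
  have hpi0 := Real.pi_pos
  have h2 : (1 : ℝ) / 2 ≤ 2 / π := by
    rw [div_le_div_iff₀ (by norm_num) hpi0]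
    linarith
  have := mul_le_mul_of_nonneg_right h2 h0
  linarith

lemma valid_erase {L : List (ℝ × ℝ)} {c : ℝ × ℝ} (hL : Valid S L)
    (hc : ∀ e ∈ L, key S e ≠ c) : Valid (S.erase c) L := by
  intro e he
  have h1 := key_mem (hL e he)
  have h2 := hc e he
  rcases key_cases S e with h | h
  · left
    rw [h] at h1 h2
    exact Finset.mem_erase.2 ⟨h2, h1⟩
  · right
    rw [h] at h1 h2
    exact Finset.mem_erase.2 ⟨h2, h1⟩

lemma clen_le_walk {L : List (ℝ × ℝ)} {e : ℝ × ℝ} (he : e ∈ L) (q p : ℝ) :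
    clen e ≤ walkCost q p L := by
  refine le_trans ?_ (clen_sum_le q p L)
  refine List.single_le_sum ?_ _ (List.mem_map_of_mem he)
  intro x hx
  obtain ⟨e, _, rfl⟩ := List.mem_map.1 hx
  exact clen_nonneg e

lemma OneShort.split {c : ℝ × ℝ} (H : OneShort S c) {L : List (ℝ × ℝ)} {p q : ℝ}
    (hL : Valid S L) (hcost : walkCost q p L < π / 2 + 1) (hnd : (L.map (key S)).Nodup)
    (hc : c ∈ L.map (key S)) :
    ∃ (e : ℝ × ℝ) (L' : List (ℝ × ℝ)), Valid (S.erase c) L' ∧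
      arcDist (mid c) e.1 = hs c ∧ arcDist (mid c) e.2 = hs c ∧
      (L' = [] ∨ ∀ a b, 1.4 ≤ walkCost a b L') ∧
      (∀ i ∈ L.map (key S), i ≠ c → ∀ a b, clen i ≤ walkCost a b L') ∧
      (walkCost q p L = arcDist p e.1 + clen c + walkCost q e.2 L' ∨
        walkCost q p L = walkCost e.1 p L' + clen c + arcDist e.2 q) := by
  have hpi' := Real.pi_lt_d6
  obtain ⟨e, he, hke⟩ := List.mem_map.1 hc
  obtain ⟨L₁, L₂, rfl⟩ := List.append_of_mem he
  rw [List.map_append, List.map_cons, hke] at hnd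
  have hnd1 : c ∉ L₁.map (key S) := by
    intro h
    have := (List.nodup_append.1 hnd).2.2 c h c (by simp)
    exact this rfl
  have hnd2 : c ∉ L₂.map (key S) :=
    (List.nodup_cons.1 (List.nodup_append.1 hnd).2.1).1
  have hv1 : Valid S L₁ := fun x hx => hL x (by simp [hx])
  have hv2 : Valid S L₂ := fun x hx => hL x (by simp [hx])
  have hn1 : ∀ x ∈ L₁, key S x ≠ c := fun x hx h => hnd1 (h ▸ List.mem_map_of_mem hx)
  have hn2 : ∀ x ∈ L₂, key S x ≠ c := fun x hx h => hnd2 (h ▸ List.mem_map_of_mem hx)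
  have hlong : ∀ L₀ : List (ℝ × ℝ), Valid S L₀ → (∀ x ∈ L₀, key S x ≠ c) →
      (L₀ = [] ∨ ∀ a b, 1.4 ≤ walkCost a b L₀) := by
    intro L₀ hv hn
    cases L₀ with
    | nil => exact Or.inl rfl
    | cons x M =>
      right
      intro a b
      have h1 := H.long _ (key_mem (hv x (by simp))) (hn x (by simp))
      rw [clen_key] at h1
      exact h1.trans (clen_le_walk (by simp) a b)
  have hmem : ∀ L₀ : List (ℝ × ℝ), ∀ i ∈ L₀.map (key S), ∀ a b, clen i ≤ walkCost a b L₀ := by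
    intro L₀ i hi a b
    obtain ⟨x, hx, rfl⟩ := List.mem_map.1 hi
    rw [clen_key]
    exact clen_le_walk hx a b
  have hce : clen e = clen c := by rw [← hke, clen_key]
  have hm1 : arcDist (mid c) e.1 = hs c ∧ arcDist (mid c) e.2 = hs c := by
    rcases key_cases S e with h | h
    · rw [hke] at h
      rw [← h]
      exact ⟨arcDist_mid_fst c, arcDist_mid_snd c⟩
    · rw [hke] at h
      have h1 := arcDist_mid_fst c
      have h2 := arcDist_mid_snd c
      have e1 : c.1 = e.2 := by rw [h]; rfl
      have e2 : c.2 = e.1 := by rw [h]; rfl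
      rw [e1] at h1
      rw [e2] at h2
      exact ⟨h2, h1⟩
  rw [walkCost_append, hce] at hcost ⊢
  have h0 := clen_nonneg c
  rcases hlong L₁ hv1 hn1 with h1 | h1
  · refine ⟨e, L₂, valid_erase hv2 hn2, hm1.1, hm1.2, hlong L₂ hv2 hn2, ?_, Or.inl ?_⟩
    · intro i hi hne
      refine hmem L₂ i ?_
      rw [h1] at hi
      simp only [List.nil_append, List.map_cons, List.mem_cons, hke] at hi
      exact hi.resolve_left hne
    · rw [h1, walkCost_nil]
  · rcases hlong L₂ hv2 hn2 with h2 | h2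
    · refine ⟨e, L₁, valid_erase hv1 hn1, hm1.1, hm1.2, hlong L₁ hv1 hn1, ?_, Or.inr ?_⟩
      · intro i hi hne
        refine hmem L₁ i ?_
        rw [h2] at hi
        simp only [List.map_append, List.map_cons, List.map_nil, List.mem_append,
          List.mem_singleton, hke] at hi
        exact hi.resolve_right hne
      · rw [h2, walkCost_nil]
    · exfalso
      have := h1 e.1 p
      have := h2 q e.2
      linarith

lemma OneShort.free {c : ℝ × ℝ} (H : OneShort S c) {L : List (ℝ × ℝ)} {m : ℝ}
    (hL : Valid (S.erase c) L)
    (hcost : walkCost (m + (π / 2 + 1) / 2) (m - (π / 2 + 1) / 2) L < π / 2 + 1) :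
    ∃ g ∈ Bg S, arcDist m (mid g) < WW c g / 2 := by
  have hpi := Real.pi_gt_d6
  have hpi' := Real.pi_lt_d6
  obtain ⟨hall, -⟩ := H.counts
  obtain ⟨L', F, -, -, -, -, a5, a6, a7, a8⟩ := walk_pack _ _ _ _ L hL hcost
  have hle : π / 2 + 1 ≤ arcDist (m - (π / 2 + 1) / 2) (m + (π / 2 + 1) / 2) := by
    rw [arcDist_comm]
    exact le_arcDist (by linarith) (by linarith)
  have hne : F.Nonempty := by
    by_contra hc
    rw [Finset.not_nonempty_iff_eq_empty] at hc
    rw [hc, Finset.sum_empty] at a7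
    linarith
  obtain ⟨i, hi⟩ := hne
  have hic := Finset.ne_of_mem_erase (a5 hi)
  have hiS := Finset.mem_of_mem_erase (a5 hi)
  have hB := hall i hiS hic
  have hy := (mem_Bg.1 hB).2
  have hl := big_long hy
  have hempty : F.erase i = ∅ := by
    rw [Finset.eq_empty_iff_forall_notMem]
    intro j hj
    have h1 := H.erase_subset (a5.trans (Finset.erase_subset _ _)) a6 hi (by linarith) j hj
    exact Finset.ne_of_mem_erase (a5 (Finset.mem_of_mem_erase hj)) h1
  have hc := a8 i hi
  rw [hempty, Finset.sum_empty, add_zero] at hc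
  refine ⟨i, hB, ?_⟩
  rcases cov_core (t := π / 2 + 1) (by linarith) (by linarith) (by linarith) le_rfl
    (by linarith) hc with ⟨h, _⟩ | ⟨_, h⟩
  · have := le_WW H.short hy
    have := ee_nonneg c
    linarith
  · exact (no_second h).elim

lemma arcDist_T (x : ℝ) : π / 2 + 1 ≤ arcDist x (x + (π / 2 + 1)) := by
  have hpi := Real.pi_gt_d6
  rw [arcDist_comm]
  exact le_arcDist (by linarith) (by linarith)

lemma OneShort.right {c : ℝ × ℝ} (H : OneShort S c) :
    ∃ g ∈ Bg S, arcDist (mid c + (π / 2 + 1) / 2) (mid g) < WW c g / 2 := by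
  have hpi := Real.pi_gt_d6
  have hpi' := Real.pi_lt_d6
  obtain ⟨L, F, a1, a2, a3, a4, a5, -, -, -⟩ :=
    level H.good (mid c + (π / 2 + 1) / 2) (π / 2 + 1) le_rfl (by linarith)
  have hp : mid c + (π / 2 + 1) / 2 - (π / 2 + 1) / 2 = mid c := by ring
  have hq : mid c + (π / 2 + 1) / 2 + (π / 2 + 1) / 2 = mid c + (π / 2 + 1) := by ring
  suffices hs : ∃ L', Valid (S.erase c) L' ∧ walkCost (mid c + (π / 2 + 1)) (mid c) L' < π / 2 + 1 by
    obtain ⟨L', h1, h2⟩ := hs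
    refine H.free h1 ?_
    rw [hp, hq]
    exact h2
  rw [hp, hq] at a2
  by_cases hc : c ∈ L.map (key S)
  · obtain ⟨e, L', h1, h2, h3, h4, -, h6⟩ := H.split a1 a2 a3 hc
    have hcl := hs_le_clen c
    have hT := arcDist_T (mid c)
    have htri := arcDist_triangle (mid c) e.2 (mid c + (π / 2 + 1))
    refine ⟨L', h1, ?_⟩
    rcases h6 with h6 | h6
    · have := walkCost_start (mid c + (π / 2 + 1)) (mid c) e.2 L'
      have := hs_nonneg c
      linarith
    · rcases h4 with h4 | h4
      · rw [h4, walkCost_nil] at h6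
        have := hs_nonneg c
        linarith
      · have := h4 e.1 (mid c)
        linarith
  · refine ⟨L, valid_erase a1 ?_, a2⟩
    intro x hx h
    exact hc (h ▸ List.mem_map_of_mem hx)

lemma OneShort.left {c : ℝ × ℝ} (H : OneShort S c) :
    ∃ g ∈ Bg S, arcDist (mid c - (π / 2 + 1) / 2) (mid g) < WW c g / 2 := by
  have hpi := Real.pi_gt_d6
  have hpi' := Real.pi_lt_d6
  obtain ⟨L, F, a1, a2, a3, a4, a5, -, -, -⟩ :=
    level H.good (mid c - (π / 2 + 1) / 2) (π / 2 + 1) le_rfl (by linarith)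
  have hp : mid c - (π / 2 + 1) / 2 - (π / 2 + 1) / 2 = mid c - (π / 2 + 1) := by ring
  have hq : mid c - (π / 2 + 1) / 2 + (π / 2 + 1) / 2 = mid c := by ring
  suffices hs : ∃ L', Valid (S.erase c) L' ∧ walkCost (mid c) (mid c - (π / 2 + 1)) L' < π / 2 + 1 by
    obtain ⟨L', h1, h2⟩ := hs
    refine H.free h1 ?_
    rw [hp, hq]
    exact h2
  rw [hp, hq] at a2
  by_cases hc : c ∈ L.map (key S)
  · obtain ⟨e, L', h1, h2, h3, h4, -, h6⟩ := H.split a1 a2 a3 hc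
    have hcl := hs_le_clen c
    have hT := arcDist_T (mid c - (π / 2 + 1))
    rw [sub_add_cancel] at hT
    have htri := arcDist_triangle (mid c - (π / 2 + 1)) e.1 (mid c)
    rw [arcDist_comm e.1] at htri
    refine ⟨L', h1, ?_⟩
    rcases h6 with h6 | h6
    · rcases h4 with h4 | h4
      · rw [h4, walkCost_nil, arcDist_comm e.2] at h6
        have := hs_nonneg c
        linarith
      · have := h4 (mid c) e.2
        linarith
    · have h7 := walkCost_append_le (mid c) (mid c - (π / 2 + 1)) e.1 L' []
      rw [List.append_nil, walkCost_nil, arcDist_comm e.1] at h7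
      have := arcDist_nonneg e.2 (mid c)
      linarith
  · refine ⟨L, valid_erase a1 ?_, a2⟩
    intro x hx h
    exact hc (h ▸ List.mem_map_of_mem hx)

lemma OneShort.absurd {c : ℝ × ℝ} (H : OneShort S c) : False := by
  have hpi := Real.pi_gt_d6
  have hpi' := Real.pi_lt_d6
  have ht : clen c < 0.7004 := by
    by_contra h
    push Not at h
    exact H.not_medium h
  obtain ⟨hall, hsum⟩ := H.counts
  obtain ⟨g1, hg1, hd1⟩ := H.right
  obtain ⟨g2, hg2, hd2⟩ := H.left
  have w1 := WW_le c g1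
  have w2 := WW_le c g2
  have w1' := WW_ge c g1
  have w2' := WW_ge c g2
  have hne : g2 ≠ g1 := by
    rintro rfl
    have h1 := arcDist_T (mid c - (π / 2 + 1) / 2)
    have h2 : mid c - (π / 2 + 1) / 2 + (π / 2 + 1) = mid c + (π / 2 + 1) / 2 := by ring
    rw [h2] at h1
    have h3 := arcDist_triangle (mid c - (π / 2 + 1) / 2) (mid g2) (mid c + (π / 2 + 1) / 2)
    rw [arcDist_comm (mid g2)] at h3
    linarith
  have hsum2 := Finset.add_sum_erase (Bg S) (WW c) hg1
  have hsum3 := Finset.add_sum_erase ((Bg S).erase g1) (WW c) (Finset.mem_erase.2 ⟨hne, hg2⟩)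
  have hcov := cover_interval (((Bg S).erase g1).erase g2) mid (WW c)
    (mid c + (π / 2 + 1) / 2 + WW c g1) (2 * π - (π / 2 + 1) - WW c g1 - WW c g2)
    (fun i _ => by linarith [WW_ge c i]) (by linarith) ?_
  · linarith
  intro m hm1 hm2
  obtain ⟨L, F, a1, a2, a3, a4, a5, a6, a7, a8⟩ := level H.good m (π / 2 + 1) le_rfl (by linarith)
  have hmc : (π / 2 + 1) / 2 ≤ arcDist m (mid c) := le_arcDist (by linarith) (by linarith)
  have hclc := clen_nonneg c
  by_cases hex : ∃ i ∈ F, i ≠ c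
  · obtain ⟨i, hi, hic⟩ := hex
    have hB := hall i (a5 hi) hic
    have hy := (mem_Bg.1 hB).2
    have h1 := H.erase_ee a5 a6 hi hy
    have h2 := le_WW H.short hy
    have h3 := WW_le c i
    have hl := big_long hy
    have hee := ee_nonneg c
    by_cases hmi : arcDist m (mid i) < WW c i / 2
    · refine ⟨i, Finset.mem_erase.2 ⟨?_, Finset.mem_erase.2 ⟨?_, hB⟩⟩, hmi⟩
      · rintro rfl
        have h4 : WW c i ≤ arcDist m (mid c - (π / 2 + 1) / 2) :=
          le_arcDist (by linarith) (by linarith)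
        have h5 := arcDist_triangle m (mid i) (mid c - (π / 2 + 1) / 2)
        rw [arcDist_comm (mid i)] at h5
        linarith
      · rintro rfl
        have h4 : WW c i ≤ arcDist m (mid c + (π / 2 + 1) / 2) :=
          le_arcDist (by linarith) (by linarith)
        have h5 := arcDist_triangle m (mid i) (mid c + (π / 2 + 1) / 2)
        rw [arcDist_comm (mid i)] at h5
        linarith
    · exfalso
      push Not at hmi
      have hN : Near c i := by
        rcases a8 i hi (π / 2 + 1 - clen i + ee c) (by linarith) (by linarith) with ⟨h, _⟩ | ⟨_, hn⟩
        · linarith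
        unfold Near
        have := sav_nonneg c
        linarith
      have hW : WW c i = 0.59 := by unfold WW; rw [if_pos hN]
      have hcF : c ∈ F := by
        by_contra hc
        have hem : F.erase i = ∅ := by
          rw [Finset.eq_empty_iff_forall_notMem]
          intro j hj
          have h4 := H.erase_subset a5 a6 hi (by linarith) j hj
          exact hc (h4 ▸ Finset.mem_of_mem_erase hj)
        rcases a8 i hi (π / 2 + 1 - clen i) (by rw [hem]; simp) (by linarith) with ⟨h5, _⟩ | ⟨_, h5⟩
        · linarith
        · exact no_second h5
      rw [a4, List.mem_toFinset] at hcF hi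
      obtain ⟨e, L', b1, b2, b3, -, b5, b6⟩ := H.split a1 a2 a3 hcF
      have b7 := b5 i hi hic
      have hcl := hs_le_clen c
      rcases b6 with b6 | b6
      · have h4 : WW c g1 ≤ arcDist (m - (π / 2 + 1) / 2) (mid c) :=
          le_arcDist (by linarith) (by linarith)
        have h5 := arcDist_triangle (m - (π / 2 + 1) / 2) e.1 (mid c)
        rw [arcDist_comm e.1, b2] at h5
        have := b7 (m + (π / 2 + 1) / 2) e.2
        linarith
      · have h4 : WW c g2 ≤ arcDist (m + (π / 2 + 1) / 2) (mid c) :=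
          le_arcDist (by linarith) (by linarith)
        have h5 := arcDist_triangle (mid c) e.2 (m + (π / 2 + 1) / 2)
        rw [arcDist_comm (mid c) (m + _), b3] at h5
        have := b7 e.1 (m - (π / 2 + 1) / 2)
        linarith
  · exfalso
    push Not at hex
    have hcF : c ∈ F := by
      by_contra hc
      have : F = ∅ := by
        rw [Finset.eq_empty_iff_forall_notMem]
        intro i hi
        exact hc (hex i hi ▸ hi)
      rw [this] at a7
      simp at a7
    have hem : F.erase c = ∅ := by
      rw [Finset.eq_empty_iff_forall_notMem]
      intro i hi
      exact Finset.ne_of_mem_erase hi (hex i (Finset.mem_of_mem_erase hi))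
    rcases a8 c hcF (π / 2 + 1 - clen c) (by rw [hem]; simp) (by linarith) with ⟨h, _⟩ | ⟨h, hn⟩
    · linarith
    · exact no_second hn

end

/-! ### Diameters -/

section
open Classical

variable {S : Finset (ℝ × ℝ)}

lemma not_good (hcard : S.card = 7) : ¬ Good S := by
  intro hG
  have h5 := card_Bg hG
  have hun : (Bg S ∪ Sh S).card = (Bg S).card + (Sh S).card :=
    Finset.card_union_of_disjoint disj_Bg_Sh
  have hle := Finset.card_le_card (Finset.union_subset (Bg_subset (S := S)) Sh_subset)
  have h : (Sh S).card = 0 ∨ (Sh S).card = 1 ∨ (Sh S).card = 2 := by omega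
  rcases h with h | h | h
  · exact case_no_short hcard hG h
  · obtain ⟨c, H⟩ := exists_one hcard hG h
    exact H.absurd
  · exact case_two hcard hG h

lemma dS_le {p q : ℝ} {L : List (ℝ × ℝ)} (hL : Valid S L) : dS S p q ≤ walkCost q p L := by
  unfold dS
  refine csInf_le ⟨0, ?_⟩ ⟨L, hL, rfl⟩
  rintro _ ⟨L', _, rfl⟩
  exact walkCost_nonneg _ _ _

lemma dS_nonneg (p q : ℝ) : 0 ≤ dS S p q := by
  unfold dS
  refine Real.sInf_nonneg ?_
  rintro _ ⟨L', _, rfl⟩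
  exact walkCost_nonneg _ _ _

lemma dS_le_pi (p q : ℝ) : dS S p q ≤ π := by
  have h : Valid S [] := by
    intro e he
    simp at he
  exact (dS_le h).trans (arcDist_le_pi p q)

lemma diamS_nonneg : 0 ≤ diamS S := by
  unfold diamS
  refine Real.sSup_nonneg ?_
  rintro _ ⟨p, q, rfl⟩
  exact dS_nonneg p q

lemma dS_le_diamS (p q : ℝ) : dS S p q ≤ diamS S := by
  unfold diamS
  refine le_csSup ⟨π, ?_⟩ ⟨p, q, rfl⟩
  rintro _ ⟨p, q, rfl⟩
  exact dS_le_pi p q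

lemma diamS_lower (hcard : S.card = 7) : π / 2 + 1 ≤ diamS S := by
  by_contra h
  push Not at h
  refine not_good hcard ?_
  intro p q
  have h1 := lt_of_le_of_lt (dS_le_diamS (S := S) p q) h
  unfold dS at h1
  obtain ⟨_, ⟨L, hL, rfl⟩, h2⟩ := exists_lt_of_csInf_lt (by
    exact ⟨_, [], by simp, rfl⟩) h1
  exact ⟨L, hL, h2⟩

/-- One chord suffices to get from `p` to `q` with cost at most `t`. -/
def Reach (S : Finset (ℝ × ℝ)) (t p q : ℝ) : Prop :=
  ∃ e : ℝ × ℝ, (e ∈ S ∨ e.swap ∈ S) ∧ arcDist p e.1 + clen e + arcDist e.2 q ≤ t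

lemma Reach.symm {t p q : ℝ} (h : Reach S t p q) : Reach S t q p := by
  obtain ⟨e, he, h⟩ := h
  refine ⟨e.swap, ?_, ?_⟩
  · rw [Prod.swap_swap]
    exact he.symm
  · rw [clen_swap, Prod.fst_swap, Prod.snd_swap, arcDist_comm q, arcDist_comm e.1]
    linarith

lemma Reach.shift {t p q : ℝ} {n : ℤ} (h : Reach S t p (q + 2 * π * n)) : Reach S t p q := by
  obtain ⟨e, he, h⟩ := h
  rw [arcDist_shift] at h
  exact ⟨e, he, h⟩

lemma Reach.dS {t p q : ℝ} (h : Reach S t p q) : dS S p q ≤ t := by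
  obtain ⟨e, he, h⟩ := h
  have hv : Valid S [e] := by
    intro x hx
    rw [List.mem_singleton] at hx
    rw [hx]
    exact he
  refine (dS_le hv).trans ?_
  rw [walkCost_cons, walkCost_nil]
  exact h

lemma diamS_le_of_reach {t : ℝ}
    (h : ∀ m ξ, t ≤ ξ → ξ ≤ π → Reach S t (m - ξ / 2) (m + ξ / 2)) : diamS S ≤ t := by
  unfold diamS
  refine csSup_le ⟨_, 0, 0, rfl⟩ ?_
  rintro _ ⟨p, q, rfl⟩
  by_cases hle : arcDist p q ≤ t
  · have hv : Valid S [] := by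
      intro e he
      simp at he
    exact (dS_le hv).trans hle
  · push Not at hle
    obtain ⟨n, hn⟩ := arcDist_attain p q
    have hpi := arcDist_le_pi p q
    rcases abs_cases (p - q + 2 * π * n) with ⟨h1, _⟩ | ⟨h1, _⟩
    · rw [h1] at hn
      have h2 := h (q + arcDist p q / 2) _ hle.le hpi
      have e1 : q + arcDist p q / 2 - arcDist p q / 2 = q := by ring
      have e2 : q + arcDist p q / 2 + arcDist p q / 2 = p + 2 * π * n := by linarith
      rw [e1, e2] at h2
      exact h2.shift.symm.dS
    · rw [h1] at hn
      have h2 := h (p + arcDist p q / 2) _ hle.le hpi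
      have e1 : p + arcDist p q / 2 - arcDist p q / 2 = p := by ring
      have e2 : p + arcDist p q / 2 + arcDist p q / 2 = q + 2 * π * ((-n : ℤ) : ℝ) := by
        push_cast
        linarith
      rw [e1, e2] at h2
      exact h2.shift.dS

lemma reach_one {e : ℝ × ℝ} {p q x y r t : ℝ} (n k : ℤ) (he : e ∈ S ∨ e.swap ∈ S)
    (hp : p - e.1 = x - y + 2 * π * n) (hq : q - e.2 = x + y + 2 * π * k)
    (hx : |x| ≤ r / 2) (hy : |y| ≤ r / 2) (ht : r + clen e ≤ t) : Reach S t p q := by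
  refine ⟨e, he, ?_⟩
  have h1 := arcDist_le p e.1 (-n)
  have h2 := arcDist_le q e.2 (-k)
  have e1 : p - e.1 + 2 * π * ((-n : ℤ) : ℝ) = x - y := by push_cast; linarith
  have e2 : q - e.2 + 2 * π * ((-k : ℤ) : ℝ) = x + y := by push_cast; linarith
  rw [e1] at h1
  rw [e2] at h2
  rw [arcDist_comm e.2]
  rw [abs_le] at hx hy
  have h3 : |x - y| + |x + y| ≤ r := by
    rcases abs_cases (x - y) with ⟨h, _⟩ | ⟨h, _⟩ <;>
      rcases abs_cases (x + y) with ⟨h', _⟩ | ⟨h', _⟩ <;> linarith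
  linarith

/-- The chord with midpoint direction `μ` and half span `φ`. -/
noncomputable def chd (μ φ : ℝ) : ℝ × ℝ := (μ - φ, μ + φ)

lemma arcDist_chd {μ φ : ℝ} (h0 : 0 ≤ φ) (h1 : φ ≤ π / 2) :
    arcDist (chd μ φ).1 (chd μ φ).2 = 2 * φ := by
  have hpi := Real.pi_pos
  unfold chd
  refine le_antisymm ((arcDist_le_abs _ _).trans ?_) ?_
  · refine abs_le.2 ⟨by linarith, by linarith⟩
  · rw [arcDist_comm]
    exact le_arcDist (by linarith) (by linarith)

lemma clen_chd {μ φ : ℝ} (h0 : 0 ≤ φ) (h1 : φ ≤ π / 2) : clen (chd μ φ) = 2 * Real.sin φ := by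
  unfold clen chordLen
  rw [arcDist_chd h0 h1]
  congr 2
  ring

lemma isShortcut_chd {μ φ : ℝ} (h0 : 0 < φ) (h1 : φ ≤ π / 2) : IsShortcut (chd μ φ) := by
  unfold IsShortcut
  rw [arcDist_chd h0.le h1]
  linarith

lemma reach_first {μ φ m ξ r t : ℝ} (n : ℤ) (h0 : 0 ≤ φ) (h1 : φ ≤ π / 2) (hmem : chd μ φ ∈ S)
    (hx : |m - μ - 2 * π * n| ≤ r / 2) (hy : |ξ / 2 - φ| ≤ r / 2) (ht : r + 2 * Real.sin φ ≤ t) :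
    Reach S t (m - ξ / 2) (m + ξ / 2) := by
  refine reach_one (e := chd μ φ) n n (Or.inl hmem) ?_ ?_ hx hy (by rw [clen_chd h0 h1]; exact ht)
  · unfold chd
    ring
  · unfold chd
    ring

lemma reach_second {μ φ m ξ r t : ℝ} (n : ℤ) (h0 : 0 ≤ φ) (h1 : φ ≤ π / 2) (hmem : chd μ φ ∈ S)
    (hx : |m - μ - π - 2 * π * n| ≤ r / 2) (hy : |ξ / 2 - (π - φ)| ≤ r / 2)
    (ht : r + 2 * Real.sin φ ≤ t) :
    Reach S t (m - ξ / 2) (m + ξ / 2) := by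
  refine reach_one (e := (chd μ φ).swap) n (n + 1) (Or.inr ?_) ?_ ?_ hx hy
    (by rw [clen_swap, clen_chd h0 h1]; exact ht)
  · rw [Prod.swap_swap]
    exact hmem
  · unfold chd
    simp only [Prod.fst_swap]
    ring
  · unfold chd
    simp only [Prod.snd_swap]
    push_cast
    ring

/-- Seven equally rotated diameters (the last one repeats the first). -/
noncomputable def S7 : Finset (ℝ × ℝ) :=
  (Finset.range 7).image (fun k : ℕ => chd (k * (π / 6)) (π / 2))

lemma S7_card : S7.card = 7 := by
  unfold S7
  rw [Finset.card_image_of_injective, Finset.card_range]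
  intro a b hab
  have hpi := Real.pi_pos
  simp only [chd, Prod.mk.injEq] at hab
  have h : (a : ℝ) * (π / 6) = b * (π / 6) := by linarith [hab.1]
  have h2 : (a : ℝ) = b := mul_right_cancel₀ (by positivity) h
  exact_mod_cast h2

lemma S7_shortcut : ∀ s ∈ S7, IsShortcut s := by
  intro s hs
  obtain ⟨k, _, rfl⟩ := Finset.mem_image.1 hs
  exact isShortcut_chd (by positivity) le_rfl

lemma S7_diam : diamS S7 ≤ π / 2 + 1 := by
  have hpi := Real.pi_gt_d6
  have hpi' := Real.pi_lt_d6
  refine diamS_le_of_reach ?_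
  intro m ξ h1 h2
  obtain ⟨k, hk⟩ : ∃ k : ℤ, k = round (m / (π / 6)) := ⟨_, rfl⟩
  have hround := abs_sub_round (m / (π / 6))
  rw [← hk] at hround
  have hx : |m - k * (π / 6)| ≤ π / 12 := by
    have e : m - k * (π / 6) = (m / (π / 6) - k) * (π / 6) := by
      field_simp
    rw [e, abs_mul, abs_of_pos (by positivity : 0 < π / 6)]
    nlinarith
  have hb0 := Int.emod_nonneg k (by norm_num : (12 : ℤ) ≠ 0)
  have hb1 := Int.emod_lt_of_pos k (by norm_num : (0 : ℤ) < 12)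
  have hdiv := Int.mul_ediv_add_emod k 12
  generalize k % 12 = b at *
  generalize k / 12 = a at *
  obtain ⟨b, rfl⟩ := Int.eq_ofNat_of_zero_le hb0
  have hkr : (k : ℝ) = 12 * a + b := by
    rw [← hdiv]
    push_cast
    ring
  by_cases hb : b < 6
  · refine reach_first (μ := b * (π / 6)) (φ := π / 2) (r := π / 2 - 1) a (by positivity) le_rfl
      ?_ ?_ ?_ ?_
    · exact Finset.mem_image.2 ⟨b, Finset.mem_range.2 (by omega), rfl⟩
    · have e : m - b * (π / 6) - 2 * π * a = m - k * (π / 6) := by rw [hkr]; ring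
      rw [e]
      linarith
    · exact abs_le.2 ⟨by linarith, by linarith⟩
    · rw [Real.sin_pi_div_two]
      linarith
  · obtain ⟨d, rfl⟩ : ∃ d, b = d + 6 := ⟨b - 6, by omega⟩
    refine reach_second (μ := d * (π / 6)) (φ := π / 2) (r := π / 2 - 1) a (by positivity) le_rfl
      ?_ ?_ ?_ ?_
    · exact Finset.mem_image.2 ⟨d, Finset.mem_range.2 (by omega), rfl⟩
    · have e : m - d * (π / 6) - π - 2 * π * a = m - k * (π / 6) := by
        rw [hkr]
        push_cast
        ring
      rw [e]
      linarith
    · exact abs_le.2 ⟨by linarith, by linarith⟩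
    · rw [Real.sin_pi_div_two]
      linarith

/-- Midpoint directions of the eight chords. -/
noncomputable def mu8 (k : ℕ) : ℝ := if k < 6 then 0.558 * k else if k = 6 then 3.803 else 5.271

/-- Half spans of the eight chords. -/
noncomputable def ph8 (k : ℕ) : ℝ := if k < 6 then π / 2 - 0.0115 else 0.56

/-- The eight chords. -/
noncomputable def S8 : Finset (ℝ × ℝ) :=
  (Finset.range 8).image (fun k : ℕ => chd (mu8 k) (ph8 k))

lemma mu8_lt {a b : ℕ} (hab : a < b) (hb : b < 8) : mu8 a < mu8 b := by
  unfold mu8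
  have hab' : (a : ℝ) < b := by exact_mod_cast hab
  by_cases h6 : b < 6
  · rw [if_pos h6, if_pos (by omega)]
    linarith
  · rw [if_neg h6]
    by_cases ha : a < 6
    · rw [if_pos ha]
      have : (a : ℝ) < 6 := by exact_mod_cast ha
      split_ifs <;> linarith
    · rw [if_neg ha, if_pos (by omega), if_neg (by omega)]
      norm_num

lemma S8_card : S8.card = 8 := by
  unfold S8
  rw [Finset.card_image_of_injOn, Finset.card_range]
  intro a ha b hb hab
  have ha' : a < 8 := by simpa using ha
  have hb' : b < 8 := by simpa using hb
  simp only [chd, Prod.mk.injEq] at hab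
  have h : mu8 a = mu8 b := by linarith [hab.1, hab.2]
  rcases lt_trichotomy a b with h1 | h1 | h1
  · exact absurd h (mu8_lt h1 hb').ne
  · exact h1
  · exact absurd h (mu8_lt h1 ha').ne'

lemma S8_shortcut : ∀ s ∈ S8, IsShortcut s := by
  intro s hs
  have hpi := Real.pi_gt_d6
  obtain ⟨k, _, rfl⟩ := Finset.mem_image.1 hs
  unfold ph8
  split_ifs
  · exact isShortcut_chd (by linarith) (by linarith)
  · exact isShortcut_chd (by norm_num) (by linarith)

lemma S8_mem {k : ℕ} (hk : k < 6) : chd (0.558 * k) (π / 2 - 0.0115) ∈ S8 := by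
  refine Finset.mem_image.2 ⟨k, Finset.mem_range.2 (by omega), ?_⟩
  simp only [mu8, ph8, hk, if_true]

lemma S8_mem6 : chd 3.803 0.56 ∈ S8 := by
  refine Finset.mem_image.2 ⟨6, Finset.mem_range.2 (by omega), ?_⟩
  simp [mu8, ph8]

lemma S8_mem7 : chd 5.271 0.56 ∈ S8 := by
  refine Finset.mem_image.2 ⟨7, Finset.mem_range.2 (by omega), ?_⟩
  simp [mu8, ph8]

lemma grid {x : ℝ} (h1 : -0.279 ≤ x) (h2 : x < 3.069) :
    ∃ k : ℕ, k < 6 ∧ |x - 0.558 * k| ≤ 0.279 := by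
  have ha : 0 ≤ x / 0.558 + 1 / 2 := by
    have : -(1 / 2) ≤ x / 0.558 := by
      rw [le_div_iff₀ (by norm_num)]
      linarith
    linarith
  have hb : x / 0.558 + 1 / 2 < 6 := by
    have : x / 0.558 < 5.5 := by
      rw [div_lt_iff₀ (by norm_num)]
      linarith
    linarith
  refine ⟨⌊x / 0.558 + 1 / 2⌋₊, ?_, ?_⟩
  · rw [Nat.floor_lt ha]
    exact_mod_cast hb
  · have f1 := Nat.floor_le ha
    have f2 := Nat.lt_floor_add_one (x / 0.558 + 1 / 2)
    generalize (⌊x / 0.558 + 1 / 2⌋₊ : ℝ) = k at *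
    have e : x = (x / 0.558) * 0.558 := by norm_num
    generalize x / 0.558 = z at *
    rw [abs_le]
    constructor <;> linarith

lemma S8_diam : diamS S8 ≤ π - 0.5822 := by
  have hpi := Real.pi_gt_d6
  have hpi' := Real.pi_lt_d6
  have hsin : Real.sin 0.56 ≤ 0.5313 := by
    have h := Real.sin_bound (x := 0.56) (by norm_num [abs_le])
    rw [abs_le] at h
    have h2 := h.2
    rw [abs_of_pos (by norm_num)] at h2
    norm_num at h2 ⊢
    linarith
  have hsin2 := Real.sin_le_one (π / 2 - 0.0115)
  refine diamS_le_of_reach ?_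
  intro m ξ h1 h2
  obtain ⟨n, x, hm, hx1, hx2⟩ : ∃ (n : ℤ) (x : ℝ), m = x + 2 * π * n ∧ -0.279 ≤ x ∧
      x < 2 * π - 0.279 := by
    have f1 := Int.floor_le ((m + 0.279) / (2 * π))
    have f2 := Int.lt_floor_add_one ((m + 0.279) / (2 * π))
    refine ⟨⌊(m + 0.279) / (2 * π)⌋, m - 2 * π * ⌊(m + 0.279) / (2 * π)⌋, by ring, ?_, ?_⟩
    · rw [le_div_iff₀ (by positivity)] at f1
      linarith
    · rw [div_lt_iff₀ (by positivity)] at f2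
      linarith
  by_cases hA : x < 3.069
  · obtain ⟨k, hk, hxk⟩ := grid hx1 hA
    refine reach_first (r := 0.5593) n (by linarith) (by linarith) (S8_mem hk) ?_ ?_ (by linarith)
    · have e : m - 0.558 * k - 2 * π * n = x - 0.558 * k := by rw [hm]; ring
      rw [e]
      linarith
    · exact abs_le.2 ⟨by linarith, by linarith⟩
  · push Not at hA
    by_cases hB : π - ξ ≤ 0.5363
    · obtain ⟨k, hk, hxk⟩ := grid (x := x - π) (by linarith) (by linarith)
      refine reach_second (r := 0.5593) n (by linarith) (by linarith) (S8_mem hk) ?_ ?_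
        (by linarith)
      · have e : m - 0.558 * k - π - 2 * π * n = x - π - 0.558 * k := by rw [hm]; ring
        rw [e]
        linarith
      · exact abs_le.2 ⟨by linarith, by linarith⟩
    · push Not at hB
      by_cases hC : x ≤ 4.537
      · refine reach_first (r := 1.496) n (by norm_num) (by linarith) S8_mem6 ?_ ?_ (by linarith)
        · have e : m - 3.803 - 2 * π * n = x - 3.803 := by rw [hm]; ring
          rw [e]
          exact abs_le.2 ⟨by linarith, by linarith⟩
        · exact abs_le.2 ⟨by linarith, by linarith⟩
      · push Not at hC
        refine reach_first (r := 1.496) n (by norm_num) (by linarith) S8_mem7 ?_ ?_ (by linarith)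
        · have e : m - 5.271 - 2 * π * n = x - 5.271 := by rw [hm]; ring
          rw [e]
          exact abs_le.2 ⟨by linarith, by linarith⟩
        · exact abs_le.2 ⟨by linarith, by linarith⟩

lemma diamK_le {k : ℕ} (hc : S.card = k) (hs : ∀ s ∈ S, IsShortcut s) : diamK k ≤ diamS S := by
  unfold diamK
  refine csInf_le ⟨0, ?_⟩ ⟨S, hc, hs, rfl⟩
  rintro _ ⟨S', _, _, rfl⟩
  exact diamS_nonneg

lemma diamK_seven : diamK 7 = π / 2 + 1 := by
  refine le_antisymm ((diamK_le S7_card S7_shortcut).trans S7_diam) ?_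
  unfold diamK
  refine le_csInf ⟨_, S7, S7_card, S7_shortcut, rfl⟩ ?_
  rintro _ ⟨S', h, _, rfl⟩
  exact diamS_lower h

end

/-- eight shortcuts improve on seven: some set of eight shortcuts has
diameter at most `π - 0.5822 < π/2 + 1`; hence `diam(8) < diam(7) = π/2 + 1`. -/
theorem stmt5 :
    (∃ S : Finset (ℝ × ℝ), S.card = 8 ∧ (∀ s ∈ S, IsShortcut s) ∧
      diamS S ≤ π - 0.5822) ∧
    π - 0.5822 < π / 2 + 1 ∧
    diamK 8 < diamK 7 ∧ diamK 7 = π / 2 + 1 := by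
  have hpi' := Real.pi_lt_d6
  have hlt : π - 0.5822 < π / 2 + 1 := by linarith
  refine ⟨⟨S8, S8_card, S8_shortcut, S8_diam⟩, hlt, ?_, diamK_seven⟩
  rw [diamK_seven]
  exact lt_of_le_of_lt ((diamK_le S8_card S8_shortcut).trans S8_diam) hlt
end

section
/- Antipodal pairs never need a combination of shortcuts in near-optimal configurations: let k ∈ {3,4,5,6} and let S be a set of k shortcuts with diam(S) ≤ π − δ*_k. Then for every antipodal pair p ∈ C, q = p + π, one has d_S(p,q) = min(d(p,q), min_{s∈S} d_{{s}}(p,q)); that is, some shortest path from p to q uses at most one shortcut of S. -/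
open Real MeasureTheory

namespace CircleShortcut

variable {ι : Type*}

/-- Lifted edge data: chord index, translation by a multiple of `2π`, orientation. -/
abbrev Edge (ι : Type*) := ι × ℤ × Bool

/-- Starting point of a lifted edge. -/
noncomputable def src (U V : ι → ℝ) (e : Edge ι) : ℝ :=
  (if e.2.2 then U e.1 else V e.1) + 2 * π * e.2.1

/-- End point of a lifted edge. -/
noncomputable def tgt (U V : ι → ℝ) (e : Edge ι) : ℝ :=
  (if e.2.2 then V e.1 else U e.1) + 2 * π * e.2.1

/-- Length of the chord. -/
noncomputable def len (U V : ι → ℝ) (i : ι) : ℝ := 2 * Real.sin ((V i - U i) / 2)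

/-- Half the saving of the chord. -/
noncomputable def del (U V : ι → ℝ) (i : ι) : ℝ := (V i - U i) / 2 - Real.sin ((V i - U i) / 2)

/-- Cost of a lifted walk on the universal cover. -/
noncomputable def lcost (U V : ι → ℝ) (y : ℝ) : ℝ → List (Edge ι) → ℝ
  | x, [] => |x - y|
  | x, e :: L => |x - src U V e| + len U V e.1 + lcost U V y (tgt U V e) L

/-- The chords span arcs of length in `(0, π]`. -/
def Good (U V : ι → ℝ) : Prop := ∀ i, U i < V i ∧ V i ≤ U i + π

variable {U V : ι → ℝ}

lemma len_nonneg (h : Good U V) (i : ι) : 0 ≤ len U V i := by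
  have h1 := h i
  have := Real.sin_nonneg_of_nonneg_of_le_pi (x := (V i - U i) / 2) (by linarith) (by linarith [Real.pi_pos])
  unfold len; linarith

lemma del_nonneg (h : Good U V) (i : ι) : 0 ≤ del U V i := by
  have h1 := h i
  have := Real.sin_le (x := (V i - U i) / 2) (by linarith)
  unfold del; linarith

lemma span_eq (i : ι) : V i - U i = len U V i + 2 * del U V i := by
  unfold len del; ring

lemma lcost_nonneg (h : Good U V) (y x : ℝ) (L : List (Edge ι)) : 0 ≤ lcost U V y x L := by
  induction L generalizing x with
  | nil => simp [lcost]
  | cons e L ih =>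
    have := ih (tgt U V e)
    have := len_nonneg h e.1
    have := abs_nonneg (x - src U V e)
    simp only [lcost]; linarith

lemma lcost_append (y x : ℝ) (A B : List (Edge ι)) (e : Edge ι) :
    lcost U V y x (A ++ e :: B) =
      lcost U V (src U V e) x A + len U V e.1 + lcost U V y (tgt U V e) B := by
  induction A generalizing x with
  | nil => simp [lcost]
  | cons f A ih => simp only [List.cons_append, lcost, ih]; ring

lemma len_le_lcost (h : Good U V) (y x : ℝ) (L : List (Edge ι)) (e : Edge ι) (he : e ∈ L) :
    len U V e.1 ≤ lcost U V y x L := by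
  obtain ⟨A, B, rfl⟩ := List.append_of_mem he
  rw [lcost_append]
  have := lcost_nonneg h (src U V e) x A
  have := lcost_nonneg h y (tgt U V e) B
  linarith

lemma abs_tgt_sub_src (h : Good U V) (e : Edge ι) :
    |tgt U V e - src U V e| = V e.1 - U e.1 := by
  have h1 := h e.1
  rcases e with ⟨i, n, b⟩
  cases b <;> simp [src, tgt] at *
  · rw [abs_of_neg] <;> linarith
  · linarith

/-- Jordan type bound of the displacement by the cost. -/
lemma disp_le (h : Good U V) (κ : ℝ) (hκ : 1 ≤ κ) (y x : ℝ) (L : List (Edge ι))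
    (hL : ∀ e ∈ L, V e.1 - U e.1 ≤ κ * len U V e.1) : |x - y| ≤ κ * lcost U V y x L := by
  induction L generalizing x with
  | nil =>
    simp only [lcost]
    nlinarith [abs_nonneg (x - y)]
  | cons e L ih =>
    have h1 := ih (tgt U V e) (fun f hf => hL f (List.mem_cons_of_mem _ hf))
    have h2 := hL e List.mem_cons_self
    have h3 := abs_tgt_sub_src h e
    simp only [lcost]
    have h4 : |x - y| ≤ |x - src U V e| + |tgt U V e - src U V e| + |tgt U V e - y| := by
      have a1 := abs_sub_le x (src U V e) y
      have a2 := abs_sub_le (src U V e) (tgt U V e) y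
      rw [abs_sub_comm (src U V e) (tgt U V e)] at a2
      linarith
    have h5 : |x - src U V e| ≤ κ * |x - src U V e| := by
      nlinarith [abs_nonneg (x - src U V e)]
    nlinarith

lemma span_le_jordan (h : Good U V) (i : ι) : V i - U i ≤ π / 2 * len U V i := by
  have h1 := h i
  have := Real.mul_le_sin (x := (V i - U i) / 2) (by linarith) (by linarith)
  have hp := Real.pi_pos
  unfold len
  have h2 : π / 2 * (2 / π * ((V i - U i) / 2)) ≤ π / 2 * Real.sin ((V i - U i) / 2) :=
    mul_le_mul_of_nonneg_left this (by positivity)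
  have h3 : π / 2 * (2 / π * ((V i - U i) / 2)) = (V i - U i) / 2 := by field_simp
  linarith

lemma disp_le_jordan (h : Good U V) (y x : ℝ) (L : List (Edge ι)) :
    |x - y| ≤ π / 2 * lcost U V y x L :=
  disp_le h _ (by linarith [Real.pi_gt_three]) y x L (fun e _ => span_le_jordan h e.1)

/-- savings of a lifted walk in direction `b` -/
noncomputable def sav (U V : ι → ℝ) (b : Bool) (L : List (Edge ι)) : ℝ :=
  (L.map (fun e => if e.2.2 = b then 2 * del U V e.1 else 0)).sum

/-- the sign of a direction -/
def sg (b : Bool) : ℝ := if b then 1 else -1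

lemma sg_mul_le_abs (b : Bool) (x : ℝ) : sg b * x ≤ |x| := by
  cases b <;> simp [sg]
  · exact neg_le_abs x
  · exact le_abs_self x

lemma disp_le_sav (h : Good U V) (b : Bool) (y x : ℝ) (L : List (Edge ι)) :
    sg b * (y - x) ≤ lcost U V y x L + sav U V b L := by
  induction L generalizing x with
  | nil =>
    simp only [lcost, sav, List.map_nil, List.sum_nil, add_zero]
    rw [abs_sub_comm]; exact sg_mul_le_abs _ _
  | cons e L ih =>
    have h1 := ih (tgt U V e)
    have h2 : sg b * (src U V e - x) ≤ |x - src U V e| := by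
      rw [abs_sub_comm]; exact sg_mul_le_abs _ _
    have h3 : sg b * (tgt U V e - src U V e) ≤
        len U V e.1 + if e.2.2 = b then 2 * del U V e.1 else 0 := by
      have := h e.1
      have h4 := span_eq (U := U) (V := V) e.1
      have h5 := len_nonneg h e.1
      have h6 := del_nonneg h e.1
      rcases e with ⟨i, n, c⟩
      cases b <;> cases c <;> simp [sg, src, tgt] at * <;> linarith
    simp only [lcost, sav, List.map_cons, List.sum_cons] at *
    linarith

/-- no repeated chord in direction `b` -/
def NoRep (b : Bool) (L : List (Edge ι)) : Prop :=
  L.Pairwise (fun e f => ¬ (e.1 = f.1 ∧ e.2.2 = b ∧ f.2.2 = b))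

lemma exists_noRep (h : Good U V) (b : Bool) (P : ι → Prop) (y : ℝ) (L : List (Edge ι)) (x : ℝ)
    (hL : ∀ e ∈ L, P e.1) (hc : lcost U V y x L < 4) :
    ∃ L' : List (Edge ι), (∀ e ∈ L', P e.1) ∧ lcost U V y x L' ≤ lcost U V y x L ∧ NoRep b L' := by
  induction L generalizing x with
  | nil => exact ⟨[], by simp, le_rfl, List.Pairwise.nil⟩
  | cons e T ih =>
    have hpos := len_nonneg h e.1
    have hab := abs_nonneg (x - src U V e)
    simp only [lcost] at hc
    obtain ⟨T', hT1, hT2, hT3⟩ := ih (tgt U V e) (fun f hf => hL f (List.mem_cons_of_mem _ hf))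
      (by linarith)
    by_cases hex : ∃ f ∈ T', e.1 = f.1 ∧ e.2.2 = b ∧ f.2.2 = b
    · obtain ⟨f, hf, h1, h2, h3⟩ := hex
      obtain ⟨B, C, rfl⟩ := List.append_of_mem hf
      rw [lcost_append] at hT2
      have hB := lcost_nonneg h (src U V f) (tgt U V e) B
      have hC := lcost_nonneg h y (tgt U V f) C
      have hlf := len_nonneg h f.1
      have hd := disp_le_jordan h (src U V f) (src U V e) (e :: B)
      simp only [lcost, sub_self, abs_zero, zero_add] at hd
      have hfe : f = e := by
        rcases e with ⟨i, n, c⟩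
        rcases f with ⟨j, m, d⟩
        simp only at h1 h2 h3
        subst h1 h2 h3
        have : |(n : ℝ) - m| < 1 := by
          have e1 : src U V (i, n, d) - src U V (i, m, d) = 2 * π * ((n : ℝ) - m) := by
            simp only [src]; ring
          rw [e1, abs_mul, abs_of_pos Real.two_pi_pos] at hd
          have hp := Real.pi_pos
          have : 2 * π * |(n : ℝ) - m| < 2 * π * 1 := by
            refine lt_of_le_of_lt hd ?_
            nlinarith
          exact lt_of_mul_lt_mul_left this (by positivity)
        have h4 : |n - m| < 1 := by exact_mod_cast this
        have h5 : n = m := by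
          have := Int.abs_lt_one_iff.mp h4
          omega
        rw [h5]
      subst hfe
      refine ⟨f :: C, ?_, ?_, ?_⟩
      · intro g hg
        rcases List.mem_cons.mp hg with rfl | hg
        · exact hL _ List.mem_cons_self
        · exact hT1 g (by simp [hg])
      · simp only [lcost]; linarith
      · unfold NoRep at hT3 ⊢
        exact (List.pairwise_append.mp hT3).2.1
    · refine ⟨e :: T', ?_, ?_, ?_⟩
      · intro g hg
        rcases List.mem_cons.mp hg with rfl | hg
        · exact hL _ List.mem_cons_self
        · exact hT1 g hg
      · simp only [lcost]; linarith
      · refine List.pairwise_cons.mpr ⟨?_, hT3⟩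
        intro f hf hh
        exact hex ⟨f, hf, hh⟩

lemma sav_le [DecidableEq ι] (b : Bool) (S : Finset ι) (w : ι → ℝ)
    (hw : ∀ i, 0 ≤ w i)
    (L : List (Edge ι)) (hS : ∀ e ∈ L, e.2.2 = b → e.1 ∈ S)
    (hwd : ∀ e ∈ L, 2 * del U V e.1 ≤ w e.1)
    (hN : NoRep b L) : sav U V b L ≤ ∑ i ∈ S, w i := by
  induction L generalizing S with
  | nil => simpa [sav] using Finset.sum_nonneg (fun i _ => hw i)
  | cons e L ih =>
    obtain ⟨h1, h2⟩ := List.pairwise_cons.mp hN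
    have hc : sav U V b (e :: L) = (if e.2.2 = b then 2 * del U V e.1 else 0) + sav U V b L := by
      simp [sav]
    rw [hc]
    split_ifs with hb
    · have h3 := ih (S.erase e.1) (fun f hf hfb => by
        refine Finset.mem_erase.mpr ⟨?_, hS f (List.mem_cons_of_mem _ hf) hfb⟩
        intro hfe
        exact h1 f hf ⟨hfe.symm, hb, hfb⟩) (fun f hf => hwd f (List.mem_cons_of_mem _ hf)) h2
      rw [← Finset.add_sum_erase S w (hS e List.mem_cons_self hb)]
      have := hwd e List.mem_cons_self
      linarith
    · rw [zero_add]
      exact ih S (fun f hf => hS f (List.mem_cons_of_mem _ hf))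
        (fun f hf => hwd f (List.mem_cons_of_mem _ hf)) h2

lemma nonneg_of_deriv {f f' : ℝ → ℝ} (hf : ∀ x, HasDerivAt f (f' x) x) (h0 : f 0 = 0)
    (hn : ∀ x, 0 ≤ x → 0 ≤ f' x) (x : ℝ) (hx : 0 ≤ x) : 0 ≤ f x := by
  have hm : MonotoneOn f (Set.Ici 0) := by
    apply monotoneOn_of_deriv_nonneg (convex_Ici 0)
    · exact fun y _ => (hf y).continuousAt.continuousWithinAt
    · exact fun y _ => (hf y).differentiableAt.differentiableWithinAt
    · intro y hy
      rw [interior_Ici] at hy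
      rw [(hf y).deriv]
      exact hn y (le_of_lt hy)
  have := hm (Set.mem_Ici.mpr le_rfl) (Set.mem_Ici.mpr hx) hx
  rwa [h0] at this

lemma hasDerivAt_pow_div (n : ℕ) (c x : ℝ) :
    HasDerivAt (fun y : ℝ => y ^ n / c) (n * x ^ (n - 1) / c) x :=
  (hasDerivAt_pow n x).div_const c

lemma cos_upper4 (x : ℝ) (hx : 0 ≤ x) : 0 ≤ 1 - x ^ 2 / 2 + x ^ 4 / 24 - Real.cos x := by
  refine nonneg_of_deriv (f := fun x => 1 - x ^ 2 / 2 + x ^ 4 / 24 - Real.cos x)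
    (f' := fun x => Real.sin x - (x - x ^ 3 / 6)) (fun x => ?_) (by norm_num) (fun x hx => ?_) x hx
  · have := (((hasDerivAt_const x (1 : ℝ)).sub (hasDerivAt_pow_div 2 2 x)).add
      (hasDerivAt_pow_div 4 24 x)).sub (Real.hasDerivAt_cos x)
    refine HasDerivAt.congr_deriv this ?_
    push_cast; linarith
  · linarith [Real.sin_ge_sub_cube hx]

lemma sin_upper5 (x : ℝ) (hx : 0 ≤ x) : 0 ≤ x - x ^ 3 / 6 + x ^ 5 / 120 - Real.sin x := by
  refine nonneg_of_deriv (f := fun x => x - x ^ 3 / 6 + x ^ 5 / 120 - Real.sin x)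
    (f' := fun x => 1 - x ^ 2 / 2 + x ^ 4 / 24 - Real.cos x) (fun x => ?_) (by norm_num)
    cos_upper4 x hx
  have := (((hasDerivAt_id x).sub (hasDerivAt_pow_div 3 6 x)).add
      (hasDerivAt_pow_div 5 120 x)).sub (Real.hasDerivAt_sin x)
  refine HasDerivAt.congr_deriv this ?_
  push_cast; linarith

lemma cos_lower6 (x : ℝ) (hx : 0 ≤ x) :
    0 ≤ Real.cos x - (1 - x ^ 2 / 2 + x ^ 4 / 24 - x ^ 6 / 720) := by
  refine nonneg_of_deriv (f := fun x => Real.cos x - (1 - x ^ 2 / 2 + x ^ 4 / 24 - x ^ 6 / 720))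
    (f' := fun x => x - x ^ 3 / 6 + x ^ 5 / 120 - Real.sin x) (fun x => ?_) (by norm_num)
    sin_upper5 x hx
  have := (Real.hasDerivAt_cos x).sub ((((hasDerivAt_const x (1 : ℝ)).sub
    (hasDerivAt_pow_div 2 2 x)).add (hasDerivAt_pow_div 4 24 x)).sub (hasDerivAt_pow_div 6 720 x))
  refine HasDerivAt.congr_deriv this ?_
  push_cast; linarith

lemma sin_lower7 (x : ℝ) (hx : 0 ≤ x) :
    0 ≤ Real.sin x - (x - x ^ 3 / 6 + x ^ 5 / 120 - x ^ 7 / 5040) := by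
  refine nonneg_of_deriv (f := fun x => Real.sin x - (x - x ^ 3 / 6 + x ^ 5 / 120 - x ^ 7 / 5040))
    (f' := fun x => Real.cos x - (1 - x ^ 2 / 2 + x ^ 4 / 24 - x ^ 6 / 720)) (fun x => ?_)
    (by norm_num) cos_lower6 x hx
  have := (Real.hasDerivAt_sin x).sub ((((hasDerivAt_id x).sub
    (hasDerivAt_pow_div 3 6 x)).add (hasDerivAt_pow_div 5 120 x)).sub (hasDerivAt_pow_div 7 5040 x))
  refine HasDerivAt.congr_deriv this ?_
  push_cast; linarith

lemma cos_upper8 (x : ℝ) (hx : 0 ≤ x) :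
    0 ≤ 1 - x ^ 2 / 2 + x ^ 4 / 24 - x ^ 6 / 720 + x ^ 8 / 40320 - Real.cos x := by
  refine nonneg_of_deriv
    (f := fun x => 1 - x ^ 2 / 2 + x ^ 4 / 24 - x ^ 6 / 720 + x ^ 8 / 40320 - Real.cos x)
    (f' := fun x => Real.sin x - (x - x ^ 3 / 6 + x ^ 5 / 120 - x ^ 7 / 5040)) (fun x => ?_)
    (by norm_num) sin_lower7 x hx
  have := (((((hasDerivAt_const x (1 : ℝ)).sub (hasDerivAt_pow_div 2 2 x)).add
    (hasDerivAt_pow_div 4 24 x)).sub (hasDerivAt_pow_div 6 720 x)).add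
    (hasDerivAt_pow_div 8 40320 x)).sub (Real.hasDerivAt_cos x)
  refine HasDerivAt.congr_deriv this ?_
  push_cast; linarith

/-- Taylor lower bound for the sine. -/
lemma sin_lower {x : ℝ} (hx : 0 ≤ x) : x - x ^ 3 / 6 + x ^ 5 / 120 - x ^ 7 / 5040 ≤ Real.sin x := by
  linarith [sin_lower7 x hx]

/-- Taylor upper bound for the sine. -/
lemma sin_upper {x : ℝ} (hx : 0 ≤ x) :
    Real.sin x ≤ x - x ^ 3 / 6 + x ^ 5 / 120 - x ^ 7 / 5040 + x ^ 9 / 362880 := by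
  have := nonneg_of_deriv
    (f := fun x => x - x ^ 3 / 6 + x ^ 5 / 120 - x ^ 7 / 5040 + x ^ 9 / 362880 - Real.sin x)
    (f' := fun x => 1 - x ^ 2 / 2 + x ^ 4 / 24 - x ^ 6 / 720 + x ^ 8 / 40320 - Real.cos x)
    (fun x => by
      have := (((((hasDerivAt_id x).sub (hasDerivAt_pow_div 3 6 x)).add
        (hasDerivAt_pow_div 5 120 x)).sub (hasDerivAt_pow_div 7 5040 x)).add
        (hasDerivAt_pow_div 9 362880 x)).sub (Real.hasDerivAt_sin x)
      refine HasDerivAt.congr_deriv this ?_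
      push_cast; linarith) (by norm_num) cos_upper8 x hx
  linarith

/-- stretch factor for walks of length at most `r` -/
noncomputable def K (r : ℝ) : ℝ :=
  if r ≤ 6 / 10 then 1016 / 1000 else if r ≤ 9 / 10 then 1038 / 1000 else
    if r ≤ 12 / 10 then 1075 / 1000 else if r ≤ 16 / 10 then 117 / 100 else 158 / 100

lemma one_le_K (r : ℝ) : 1 ≤ K r := by unfold K; split_ifs <;> norm_num
lemma K_le (r : ℝ) : K r ≤ 158 / 100 := by unfold K; split_ifs <;> norm_num
lemma K_le1 {r : ℝ} (h : r ≤ 6 / 10) : K r ≤ 1016 / 1000 := by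
  unfold K; split_ifs <;> norm_num
lemma K_le2 {r : ℝ} (h : r ≤ 9 / 10) : K r ≤ 1038 / 1000 := by
  unfold K; split_ifs <;> norm_num
lemma K_le3 {r : ℝ} (h : r ≤ 12 / 10) : K r ≤ 1075 / 1000 := by
  unfold K; split_ifs <;> norm_num
lemma K_le4 {r : ℝ} (h : r ≤ 16 / 10) : K r ≤ 117 / 100 := by
  unfold K; split_ifs <;> norm_num

lemma sin_stretch {x c ψ κ : ℝ} (hx : 0 ≤ x) (hx2 : x ≤ π / 2) (hψ : 0 ≤ ψ) (hc : 2 * Real.sin x ≤ c)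
    (hs : c / 2 ≤ ψ - ψ ^ 3 / 6 + ψ ^ 5 / 120 - ψ ^ 7 / 5040)
    (hκ0 : 0 ≤ κ) (hκ : 1 ≤ κ * (1 - ψ ^ 2 / 6)) : x ≤ κ * Real.sin x := by
  by_cases hlt : ψ < x
  · have h1 := Real.sin_lt_sin_of_lt_of_le_pi_div_two (by linarith [Real.pi_pos]) hx2 hlt
    have h2 := sin_lower hψ
    linarith
  · push Not at hlt
    have h1 := Real.sin_ge_sub_cube hx
    have h2 : x ^ 2 ≤ ψ ^ 2 := by nlinarith
    have h3 : κ * (x - x ^ 3 / 6) ≤ κ * Real.sin x := mul_le_mul_of_nonneg_left h1 hκ0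
    have h4 : κ * (x * (1 - ψ ^ 2 / 6)) ≤ κ * (x - x ^ 3 / 6) := by
      apply mul_le_mul_of_nonneg_left _ hκ0
      nlinarith
    nlinarith

lemma span_le_K (h : Good U V) (i : ι) (r : ℝ) (hr : len U V i ≤ r) :
    V i - U i ≤ K r * len U V i := by
  have h1 := h i
  have hl := len_nonneg h i
  have hx : 0 ≤ (V i - U i) / 2 := by linarith
  have hx2 : (V i - U i) / 2 ≤ π / 2 := by linarith
  unfold len at *
  unfold K
  split_ifs with a1 a2 a3 a4
  · have := sin_stretch (c := 6 / 10) (ψ := 305 / 1000) (κ := 1016 / 1000) hx hx2 (by norm_num)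
      (by linarith) (by norm_num) (by norm_num) (by norm_num)
    linarith
  · have := sin_stretch (c := 9 / 10) (ψ := 467 / 1000) (κ := 1038 / 1000) hx hx2 (by norm_num)
      (by linarith) (by norm_num) (by norm_num) (by norm_num)
    linarith
  · have := sin_stretch (c := 12 / 10) (ψ := 644 / 1000) (κ := 1075 / 1000) hx hx2 (by norm_num)
      (by linarith) (by norm_num) (by norm_num) (by norm_num)
    linarith
  · have := sin_stretch (c := 16 / 10) (ψ := 928 / 1000) (κ := 117 / 100) hx hx2 (by norm_num)
      (by linarith) (by norm_num) (by norm_num) (by norm_num)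
    linarith
  · have := span_le_jordan h i
    unfold len at this
    have hp := Real.pi_lt_d2
    nlinarith

/-- midpoint of the arc spanned by a chord -/
noncomputable def mid (U V : ι → ℝ) (i : ι) : ℝ := (U i + V i) / 2

/-- maximal displacement next to a chord in a walk of cost `D` -/
noncomputable def rad (U V : ι → ℝ) (D : ℝ) (i : ι) : ℝ := K (D - len U V i) * (D - len U V i)

lemma mid_close (h : Good U V) (D : ℝ) (y x : ℝ) (L : List (Edge ι)) (hc : lcost U V y x L < D)
    (e : Edge ι) (he : e ∈ L) :
    |(x + y) / 2 - (mid U V e.1 + 2 * π * e.2.1)| ≤ rad U V D e.1 / 2 := by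
  obtain ⟨A, B, rfl⟩ := List.append_of_mem he
  rw [lcost_append] at hc
  have hA := lcost_nonneg h (src U V e) x A
  have hB := lcost_nonneg h y (tgt U V e) B
  set r := D - len U V e.1 with hr
  have hK := one_le_K r
  have h1 := disp_le h (K r) hK (src U V e) x A (fun f hf => span_le_K h f.1 r (by
    have := len_le_lcost h (src U V e) x A f hf
    linarith))
  have h2 := disp_le h (K r) hK y (tgt U V e) B (fun f hf => span_le_K h f.1 r (by
    have := len_le_lcost h y (tgt U V e) B f hf
    linarith))
  have h3 : K r * (lcost U V (src U V e) x A + lcost U V y (tgt U V e) B) ≤ K r * r :=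
    mul_le_mul_of_nonneg_left (by linarith) (by linarith)
  have h4 : (x + y) / 2 - (mid U V e.1 + 2 * π * e.2.1) =
      ((x - src U V e) - (tgt U V e - y)) / 2 := by
    unfold mid src tgt
    split_ifs <;> ring
  rw [h4, abs_div, abs_two]
  have h5 := abs_sub (x - src U V e) (tgt U V e - y)
  unfold rad
  rw [← hr]
  linarith


/-- weight of a chord -/
noncomputable def wt (U V : ι → ℝ) (δ : ℝ) (i : ι) : ℝ := 2 * min (del U V i) δ

local instance : Fact (0 < 2 * π) := ⟨Real.two_pi_pos⟩

/-- set of directions served by a chord -/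
noncomputable def served (U V : ι → ℝ) (D : ℝ) (i : ι) : Set (AddCircle (2 * π)) :=
  Metric.closedBall ((mid U V i : ℝ) : AddCircle (2 * π)) (rad U V D i / 2)

lemma mem_served (D : ℝ) (i : ι) (t : ℝ) (n : ℤ)
    (h : |t - (mid U V i + 2 * π * n)| ≤ rad U V D i / 2) :
    (t : AddCircle (2 * π)) ∈ served U V D i := by
  unfold served
  rw [Metric.mem_closedBall, dist_eq_norm]
  have : (t : AddCircle (2 * π)) - ((mid U V i : ℝ) : AddCircle (2 * π)) =
      ((t - (mid U V i + 2 * π * n) : ℝ) : AddCircle (2 * π)) := by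
    rw [AddCircle.coe_sub, AddCircle.coe_add]
    have : ((2 * π * n : ℝ) : AddCircle (2 * π)) = 0 := by
      rw [AddCircle.coe_eq_zero_iff]
      exact ⟨n, by simp [mul_comm]⟩
    rw [this, add_zero]
  rw [this]
  exact (QuotientAddGroup.norm_mk_le_norm).trans h

/-- existence of short lifted walks -/
def Conn (U V : ι → ℝ) (S : Finset ι) (D : ℝ) : Prop :=
  ∀ p q : ℝ, ∃ (n : ℤ) (L : List (Edge ι)), (∀ e ∈ L, e.1 ∈ S) ∧
    lcost U V (q + 2 * π * n) p L < D

lemma continuous_lcost (L : List (Edge ι)) {f g : ℝ → ℝ} (hf : Continuous f) (hg : Continuous g) :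
    Continuous (fun t => lcost U V (f t) (g t) L) := by
  induction L generalizing g with
  | nil => simp only [lcost]; fun_prop
  | cons e L ih =>
    simp only [lcost]
    have := ih (g := fun _ => tgt U V e) continuous_const
    fun_prop

lemma exists_pair (h : Good U V) (S : Finset ι) (D : ℝ) (hD2 : 2 ≤ D) (hDp : D ≤ π)
    (hC : Conn U V S D) (θ : ℝ) :
    ∃ η : ℝ, (∃ L : List (Edge ι), (∀ e ∈ L, e.1 ∈ S) ∧
        lcost U V (θ + π / 2 + η) (θ - π / 2 - η) L < D) ∧
      (∃ L : List (Edge ι), (∀ e ∈ L, e.1 ∈ S) ∧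
        lcost U V (θ + π / 2 + η - 2 * π) (θ - π / 2 - η) L < D) := by
  set A : Set ℝ := {η | ∃ L : List (Edge ι), (∀ e ∈ L, e.1 ∈ S) ∧
        lcost U V (θ + π / 2 + η) (θ - π / 2 - η) L < D} with hA
  set B : Set ℝ := {η | ∃ L : List (Edge ι), (∀ e ∈ L, e.1 ∈ S) ∧
        lcost U V (θ + π / 2 + η - 2 * π) (θ - π / 2 - η) L < D} with hB
  have hp3 := Real.pi_gt_three
  have hp4 := Real.pi_lt_d2
  have key : ∀ f : ℝ → ℝ, Continuous f → IsOpen {η | ∃ L : List (Edge ι), (∀ e ∈ L, e.1 ∈ S) ∧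
        lcost U V (f η) (θ - π / 2 - η) L < D} := by
    intro f hf
    have : {η | ∃ L : List (Edge ι), (∀ e ∈ L, e.1 ∈ S) ∧
        lcost U V (f η) (θ - π / 2 - η) L < D} =
        ⋃ L : {L : List (Edge ι) // ∀ e ∈ L, e.1 ∈ S},
          {η | lcost U V (f η) (θ - π / 2 - η) L.1 < D} := by
      ext η; simp
    rw [this]
    refine isOpen_iUnion (fun L => ?_)
    exact isOpen_lt (continuous_lcost L.1 hf (by fun_prop)) continuous_const
  have hAo : IsOpen A := key (fun η => θ + π / 2 + η) (by fun_prop)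
  have hBo : IsOpen B := key (fun η => θ + π / 2 + η - 2 * π) (by fun_prop)
  have hcov : Set.Icc (-1 : ℝ) 1 ⊆ A ∪ B := by
    intro η hη
    obtain ⟨n, L, hL, hc⟩ := hC (θ - π / 2 - η) (θ + π / 2 + η)
    have hj := disp_le_jordan h (θ + π / 2 + η + 2 * π * n) (θ - π / 2 - η) L
    have e1 : θ - π / 2 - η - (θ + π / 2 + η + 2 * π * n) = -(π + 2 * η + 2 * π * n) := by ring
    rw [e1, abs_neg] at hj
    have hj2 : |π + 2 * η + 2 * π * n| < 5 := by
      refine lt_of_le_of_lt hj ?_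
      have := lcost_nonneg h (θ + π / 2 + η + 2 * π * n) (θ - π / 2 - η) L
      nlinarith
    rw [abs_lt] at hj2
    have hn1 : n < 1 := by
      by_contra hcon
      push Not at hcon
      have : (1 : ℝ) ≤ n := by exact_mod_cast hcon
      nlinarith [hη.1]
    have hn2 : -2 < n := by
      by_contra hcon
      push Not at hcon
      have : (n : ℝ) ≤ -2 := by exact_mod_cast hcon
      nlinarith [hη.2]
    have : n = 0 ∨ n = -1 := by omega
    rcases this with rfl | rfl
    · left
      exact ⟨L, hL, by simpa using hc⟩
    · right
      refine ⟨L, hL, ?_⟩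
      have e2 : θ + π / 2 + η + 2 * π * ((-1 : ℤ) : ℝ) = θ + π / 2 + η - 2 * π := by
        push_cast; ring
      rwa [e2] at hc
  have h1 : (Set.Icc (-1 : ℝ) 1 ∩ A).Nonempty := by
    refine ⟨-1, by norm_num, [], by simp, ?_⟩
    simp only [lcost]
    rw [abs_lt]; constructor <;> linarith
  have h2 : (Set.Icc (-1 : ℝ) 1 ∩ B).Nonempty := by
    refine ⟨1, by norm_num, [], by simp, ?_⟩
    simp only [lcost]
    rw [abs_lt]; constructor <;> linarith
  obtain ⟨η, -, h3, h4⟩ := isPreconnected_Icc A B hAo hBo hcov h1 h2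
  exact ⟨η, h3, h4⟩

lemma wt_nonneg (h : Good U V) {δ : ℝ} (hδ : 0 ≤ δ) (i : ι) : 0 ≤ wt U V δ i := by
  have := del_nonneg h i
  unfold wt
  have := le_min this hδ
  linarith

open Classical in
lemma pointwise (h : Good U V) (S : Finset ι) (δ : ℝ) (hδ : 0 ≤ δ) (hδ2 : 2 ≤ π - δ)
    (hC : Conn U V S (π - δ)) (θ : AddCircle (2 * π)) :
    2 * δ ≤ ∑ i ∈ S, (wt U V δ i * (served U V (π - δ) i).indicator 1 θ +
      wt U V δ i * (served U V (π - δ) i).indicator 1 (θ + (π : ℝ))) := by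
  obtain ⟨θ, rfl⟩ := QuotientAddGroup.mk_surjective θ
  obtain ⟨η, ⟨L1, hL1, hc1⟩, ⟨L2, hL2, hc2⟩⟩ :=
    exists_pair h S (π - δ) hδ2 (by linarith) hC θ
  have hp4 := Real.pi_lt_four
  obtain ⟨L1, hL1, hc1', hN1⟩ := exists_noRep h true (fun i => i ∈ S) _ L1 _ hL1 (by linarith)
  obtain ⟨L2, hL2, hc2', hN2⟩ := exists_noRep h false (fun i => i ∈ S) _ L2 _ hL2 (by linarith)
  replace hc1 := lt_of_le_of_lt hc1' hc1
  replace hc2 := lt_of_le_of_lt hc2' hc2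
  have hw := wt_nonneg h hδ
  have m1 : ∀ e ∈ L1, ((θ : ℝ) : AddCircle (2 * π)) ∈ served U V (π - δ) e.1 := by
    intro e he
    have := mid_close h _ _ _ L1 hc1 e he
    refine mem_served _ _ _ e.2.1 ?_
    convert this using 2
    ring
  have m2 : ∀ e ∈ L2, ((θ : ℝ) : AddCircle (2 * π)) + (π : ℝ) ∈ served U V (π - δ) e.1 := by
    intro e he
    have := mid_close h _ _ _ L2 hc2 e he
    rw [← AddCircle.coe_add]
    refine mem_served _ _ _ (e.2.1 + 1) ?_
    convert this using 2
    push_cast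
    ring
  have hi1 : ∀ (i : ι) (t : AddCircle (2 * π)),
      0 ≤ wt U V δ i * (served U V (π - δ) i).indicator 1 t := fun i t =>
    mul_nonneg (hw i) (Set.indicator_nonneg (fun _ _ => zero_le_one) _)
  have big : ∀ e : Edge ι, δ ≤ del U V e.1 → wt U V δ e.1 = 2 * δ := by
    intro e he
    unfold wt
    rw [min_eq_right he]
  by_cases hb1 : ∃ e ∈ L1, δ ≤ del U V e.1
  · obtain ⟨e, he, hde⟩ := hb1
    refine le_trans ?_ (Finset.single_le_sum (fun i _ => add_nonneg (hi1 i _) (hi1 i _)) (hL1 e he))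
    have := hi1 e.1 ((θ : ℝ) + (π : ℝ))
    refine le_trans ?_ (le_add_of_nonneg_right this)
    erw [Set.indicator_of_mem (m1 e he)]
    rw [big e hde]; simp
  by_cases hb2 : ∃ e ∈ L2, δ ≤ del U V e.1
  · obtain ⟨e, he, hde⟩ := hb2
    refine le_trans ?_ (Finset.single_le_sum (fun i _ => add_nonneg (hi1 i _) (hi1 i _)) (hL2 e he))
    have := hi1 e.1 (θ : ℝ)
    refine le_trans ?_ (le_add_of_nonneg_left this)
    erw [Set.indicator_of_mem (m2 e he)]
    rw [big e hde]; simp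
  push Not at hb1 hb2
  rw [Finset.sum_add_distrib]
  have s1 := disp_le_sav h true _ _ L1 |>.trans (add_le_add_left hc1.le _)
  have s2 := disp_le_sav h false _ _ L2 |>.trans (add_le_add_left hc2.le _)
  have gen : ∀ (b : Bool) (L : List (Edge ι)) (t : AddCircle (2 * π)), (∀ e ∈ L, e.1 ∈ S) →
      (∀ e ∈ L, t ∈ served U V (π - δ) e.1) → (∀ e ∈ L, del U V e.1 < δ) → NoRep b L →
      sav U V b L ≤ ∑ i ∈ S, wt U V δ i * (served U V (π - δ) i).indicator 1 t := by
    intro b L t g1 g2 g3 g4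
    refine sav_le b S _ (fun i => hi1 i t) L (fun e he _ => g1 e he) (fun e he => ?_) g4
    rw [Set.indicator_of_mem (g2 e he)]
    unfold wt
    rw [min_eq_left (g3 e he).le]; simp
  have g1 := gen true L1 (θ : ℝ) hL1 m1 hb1 hN1
  have g2 := gen false L2 ((θ : ℝ) + (π : ℝ)) hL2 m2 hb2 hN2
  simp only [sg] at s1 s2
  have := add_le_add g1 g2
  refine le_trans ?_ this
  norm_num at s1 s2
  linarith

lemma rad_nonneg (D : ℝ) (hD : 2 ≤ D) (i : ι) : 0 ≤ rad U V D i := by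
  unfold rad
  have := one_le_K (D - len U V i)
  have h2 : len U V i ≤ 2 := by unfold len; linarith [Real.sin_le_one ((V i - U i) / 2)]
  exact mul_nonneg (by linarith) (by linarith)

lemma core (h : Good U V) (S : Finset ι) (δ : ℝ) (hδ : 0 ≤ δ) (hδ2 : 2 ≤ π - δ)
    (hC : Conn U V S (π - δ)) :
    π * δ ≤ ∑ i ∈ S, min (del U V i) δ * rad U V (π - δ) i := by
  have hp := pointwise h S δ hδ hδ2 hC
  set B := served U V (π - δ) with hB
  have hmeas : ∀ i, MeasurableSet (B i) := fun i => Metric.isClosed_closedBall.measurableSet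
  have hIntg : ∀ i, Integrable ((B i).indicator (1 : AddCircle (2 * π) → ℝ)) volume := fun i =>
    (integrable_const (1 : ℝ)).indicator (hmeas i)
  have hint2 : ∀ i, Integrable (fun t => (B i).indicator (1 : AddCircle (2 * π) → ℝ)
      (t + ((π : ℝ) : AddCircle (2 * π)))) volume := fun i =>
    (hIntg i).comp_add_right _
  have hval : ∀ i, ∫ t, (B i).indicator (1 : AddCircle (2 * π) → ℝ) t ≤ rad U V (π - δ) i := by
    intro i
    rw [integral_indicator_one (hmeas i)]
    have hr := rad_nonneg (U := U) (V := V) (π - δ) hδ2 i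
    unfold Measure.real
    rw [hB]
    unfold served
    rw [AddCircle.volume_closedBall]
    rw [ENNReal.toReal_ofReal (le_min Real.two_pi_pos.le (by linarith))]
    exact (min_le_right _ _).trans (by linarith)
  have hval2 : ∀ i, ∫ t, (B i).indicator (1 : AddCircle (2 * π) → ℝ)
      (t + ((π : ℝ) : AddCircle (2 * π))) ≤ rad U V (π - δ) i := by
    intro i
    rw [integral_add_right_eq_self (fun t => (B i).indicator (1 : AddCircle (2 * π) → ℝ) t)]
    exact hval i
  have hle := integral_mono (μ := (volume : Measure (AddCircle (2 * π)))) (integrable_const (2 * δ))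
    (integrable_finsetSum S (fun i _ => ((hIntg i).const_mul (wt U V δ i)).add
      ((hint2 i).const_mul (wt U V δ i)))) hp
  rw [integral_const, integral_finsetSum S (fun i _ => ((hIntg i).const_mul (wt U V δ i)).add
      ((hint2 i).const_mul (wt U V δ i)))] at hle
  have hU : (volume : Measure (AddCircle (2 * π))).real Set.univ = 2 * π := by
    unfold Measure.real
    rw [AddCircle.measure_univ, ENNReal.toReal_ofReal Real.two_pi_pos.le]
  rw [hU, smul_eq_mul] at hle
  have hs : ∀ i ∈ S, ∫ t, (wt U V δ i * (B i).indicator (1 : AddCircle (2 * π) → ℝ) t +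
      wt U V δ i * (B i).indicator (1 : AddCircle (2 * π) → ℝ)
        (t + ((π : ℝ) : AddCircle (2 * π)))) ≤
      4 * (min (del U V i) δ * rad U V (π - δ) i) := by
    intro i _
    rw [integral_add ((hIntg i).const_mul (wt U V δ i)) ((hint2 i).const_mul (wt U V δ i)),
      integral_const_mul, integral_const_mul]
    have hw := wt_nonneg h hδ i
    have a1 := mul_le_mul_of_nonneg_left (hval i) hw
    have a2 := mul_le_mul_of_nonneg_left (hval2 i) hw
    have : wt U V δ i = 2 * min (del U V i) δ := rfl
    rw [this] at a1 a2 ⊢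
    linarith
  have := hle.trans (Finset.sum_le_sum hs)
  rw [← Finset.mul_sum] at this
  linarith


/-- contribution of a chord of half-angle `φ` -/
noncomputable def hfun (δ φ : ℝ) : ℝ :=
  min (φ - Real.sin φ) δ *
    (K (π - δ - 2 * Real.sin φ) * (π - δ - 2 * Real.sin φ))

/-- the numerical facts needed for the counting argument -/
def NumOK (n : ℕ) (δ : ℝ) : Prop :=
  ∃ H Hs : ℝ, (∀ φ, 0 ≤ φ → φ ≤ π / 2 → hfun δ φ ≤ H) ∧
    (∀ φ, 0 ≤ φ → φ ≤ π / 2 → 2 * Real.sin φ ≤ (π - δ) / 2 → hfun δ φ ≤ Hs) ∧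
    n * H + Hs < π * δ

lemma del_mono {x y : ℝ} (hxy : x ≤ y) : x - Real.sin x ≤ y - Real.sin y := by
  have h : Real.sin y - Real.sin x ≤ y - x := by
    rw [Real.sin_sub_sin]
    have h1 : |Real.sin ((y - x) / 2)| ≤ |(y - x) / 2| := Real.abs_sin_le_abs
    rw [abs_of_nonneg (a := (y - x) / 2) (by linarith)] at h1
    have h2 := Real.abs_cos_le_one ((y + x) / 2)
    have h3 : Real.sin ((y - x) / 2) * Real.cos ((y + x) / 2) ≤ (y - x) / 2 := by
      refine (le_abs_self _).trans ?_
      rw [abs_mul]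
      have := mul_le_mul h1 h2 (abs_nonneg _) (by linarith)
      linarith
    linarith
  linarith

lemma del_bound {φ b X : ℝ} (h0 : 0 ≤ φ) (hb : φ ≤ b)
    (hX : b - (b - b ^ 3 / 6 + b ^ 5 / 120 - b ^ 7 / 5040) ≤ X) : φ - Real.sin φ ≤ X := by
  have h1 := del_mono hb
  have h2 := sin_lower (h0.trans hb)
  linarith

lemma piece {δ φ α R κ X H Du : ℝ} (hα : 0 ≤ α) (hαφ : α ≤ φ) (hφ : φ ≤ π / 2)
    (hδ : 0 ≤ δ) (hD2 : 2 ≤ π - δ) (hD : π - δ ≤ Du) (hX : min (φ - Real.sin φ) δ ≤ X)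
    (hK : ∀ r, r ≤ R → K r ≤ κ) (hκ : 0 ≤ κ)
    (hR : Du - 2 * (α - α ^ 3 / 6 + α ^ 5 / 120 - α ^ 7 / 5040) ≤ R) (_hR0 : 0 ≤ R)
    (hH : X * (κ * R) ≤ H) : hfun δ φ ≤ H := by
  have h1 := sin_lower hα
  have h2 := Real.sin_le_sin_of_le_of_le_pi_div_two (by linarith [Real.pi_pos]) hφ hαφ
  have h3 := Real.sin_le_one φ
  have h4 : π - δ - 2 * Real.sin φ ≤ R := by linarith
  have h5 := hK _ h4
  have h6 : 0 ≤ min (φ - Real.sin φ) δ :=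
    le_min (by linarith [Real.sin_le (hα.trans hαφ)]) hδ
  refine le_trans ?_ hH
  unfold hfun
  apply mul_le_mul hX _ _ (h6.trans hX)
  · exact mul_le_mul h5 h4 (by linarith) hκ
  · exact mul_nonneg (by linarith [one_le_K (π - δ - 2 * Real.sin φ)]) (by linarith)

lemma short_bound {δ φ φc q Hs Du : ℝ} (h0 : 0 ≤ φ) (hφ : φ ≤ π / 2) (hD2 : 2 ≤ π - δ)
    (hD : π - δ ≤ Du)
    (hs : 2 * Real.sin φ ≤ (π - δ) / 2) (hc0 : 0 ≤ φc)
    (hc : Du / 4 ≤ φc - φc ^ 3 / 6 + φc ^ 5 / 120 - φc ^ 7 / 5040)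
    (hq0 : 0 ≤ q) (hq : 1 ≤ (1 + q) * (1 - φc ^ 2 / 6))
    (hH : 158 / 100 * (q * Du ^ 2 / 8) ≤ Hs) : hfun δ φ ≤ Hs := by
  have h1 := sin_stretch (x := φ) (c := Du / 2) (ψ := φc) (κ := 1 + q) h0 hφ hc0 (by linarith)
    (by linarith) (by linarith) hq
  have hs0 : 0 ≤ Real.sin φ := Real.sin_nonneg_of_nonneg_of_le_pi h0 (by linarith [Real.pi_pos])
  set s := Real.sin φ with hsd
  set D := π - δ with hDd
  refine le_trans ?_ hH
  unfold hfun
  rw [← hsd, ← hDd]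
  have hr : 0 ≤ D - 2 * s := by linarith
  have hK : K (D - 2 * s) * (D - 2 * s) ≤ 158 / 100 * (D - 2 * s) :=
    mul_le_mul_of_nonneg_right (K_le _) hr
  have hK0 : 0 ≤ K (D - 2 * s) * (D - 2 * s) :=
    mul_nonneg (by linarith [one_le_K (D - 2 * s)]) hr
  have h2 : min (φ - s) δ ≤ q * s := (min_le_left _ _).trans (by linarith)
  have hqs : 0 ≤ q * s := mul_nonneg hq0 hs0
  calc min (φ - s) δ * (K (D - 2 * s) * (D - 2 * s))
      ≤ (q * s) * (158 / 100 * (D - 2 * s)) := mul_le_mul h2 hK hK0 hqs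
    _ = 158 / 100 * (q * (s * (D - 2 * s))) := by ring
    _ ≤ 158 / 100 * (q * (Du ^ 2 / 8)) := by
        have : s * (D - 2 * s) ≤ Du ^ 2 / 8 := by nlinarith [sq_nonneg (D - 4 * s)]
        have := mul_le_mul_of_nonneg_left this hq0
        linarith
    _ = _ := by ring

lemma num3 {δ : ℝ} (h1 : 2503/10000 ≤ δ) (h2 : δ ≤ 157/625) : NumOK 2 δ := by
  have hp1 := Real.pi_gt_d4
  have hp2 := Real.pi_lt_d4
  have hD : π - δ ≤ 28913/10000 := by linarith
  have hD2 : 2 ≤ π - δ := by linarith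
  have hδ : 0 ≤ δ := by linarith
  refine ⟨5847/20000, 20159/100000, ?_, ?_, ?_⟩
  · intro φ h0 hφ
    rcases le_or_gt (1131/1000) φ with hb0 | hb
    · exact piece (α := 1131/1000) (R := 541/500) (κ := 43/40) (X := 157/625) (by norm_num)
        hb0 hφ hδ hD2 hD (min_le_right _ _ |>.trans h2)
        (fun r hr => (K_le3 (hr.trans (by norm_num))).trans (by norm_num)) (by norm_num) (by norm_num) (by norm_num) (by norm_num)
    rcases le_or_gt (126/125) φ with hb0 | hb
    · exact piece (α := 126/125) (R := 6/5) (κ := 43/40) (X := 1131/5000) (by norm_num)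
        hb0 hφ hδ hD2 hD (min_le_left _ _ |>.trans (del_bound h0 (b := 1131/1000) (le_of_lt hb) (by norm_num)))
        (fun r hr => (K_le3 (hr.trans (by norm_num))).trans (by norm_num)) (by norm_num) (by norm_num) (by norm_num) (by norm_num)
    rcases le_or_gt (743/1000) φ with hb0 | hb
    · exact piece (α := 743/1000) (R := 1539/1000) (κ := 117/100) (X := 1623/10000) (by norm_num)
        hb0 hφ hδ hD2 hD (min_le_left _ _ |>.trans (del_bound h0 (b := 126/125) (le_of_lt hb) (by norm_num)))
        (fun r hr => (K_le4 (hr.trans (by norm_num))).trans (by norm_num)) (by norm_num) (by norm_num) (by norm_num) (by norm_num)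
    rcases le_or_gt (11/200) φ with hb0 | hb
    · exact piece (α := 11/200) (R := 1391/500) (κ := 79/50) (X := 133/2000) (by norm_num)
        hb0 hφ hδ hD2 hD (min_le_left _ _ |>.trans (del_bound h0 (b := 743/1000) (le_of_lt hb) (by norm_num)))
        (fun r _ => (K_le r).trans (by norm_num)) (by norm_num) (by norm_num) (by norm_num) (by norm_num)
    have hb0 := h0
    exact piece (α := 0) (R := 723/250) (κ := 79/50) (X := 1/10000) (by norm_num)
        hb0 hφ hδ hD2 hD (min_le_left _ _ |>.trans (del_bound h0 (b := 11/200) (le_of_lt hb) (by norm_num)))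
        (fun r _ => (K_le r).trans (by norm_num)) (by norm_num) (by norm_num) (by norm_num) (by norm_num)
  · intro φ h0 hφ hs
    exact short_bound (φc := 101/125) (q := 122097/1000000) h0 hφ hD2 hD hs (by norm_num) (by norm_num)
      (by norm_num) (by norm_num) (by norm_num)
  · push_cast
    nlinarith

lemma num4 {δ : ℝ} (h1 : 1969/5000 ≤ δ) (h2 : δ ≤ 3947/10000) : NumOK 3 δ := by
  have hp1 := Real.pi_gt_d4
  have hp2 := Real.pi_lt_d4
  have hD : π - δ ≤ 13739/5000 := by linarith
  have hD2 : 2 ≤ π - δ := by linarith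
  have hδ : 0 ≤ δ := by linarith
  refine ⟨35981/100000, 3153/20000, ?_, ?_, ?_⟩
  · intro φ h0 hφ
    rcases le_or_gt (1209/1000) φ with hb0 | hb
    · exact piece (α := 1209/1000) (R := 439/500) (κ := 519/500) (X := 3947/10000) (by norm_num)
        hb0 hφ hδ hD2 hD (min_le_right _ _ |>.trans h2)
        (fun r hr => (K_le2 (hr.trans (by norm_num))).trans (by norm_num)) (by norm_num) (by norm_num) (by norm_num) (by norm_num)
    rcases le_or_gt (177/200) φ with hb0 | hb
    · exact piece (α := 177/200) (R := 6/5) (κ := 43/40) (X := 1369/5000) (by norm_num)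
        hb0 hφ hδ hD2 hD (min_le_left _ _ |>.trans (del_bound h0 (b := 1209/1000) (le_of_lt hb) (by norm_num)))
        (fun r hr => (K_le3 (hr.trans (by norm_num))).trans (by norm_num)) (by norm_num) (by norm_num) (by norm_num) (by norm_num)
    rcases le_or_gt (357/1000) φ with hb0 | hb
    · exact piece (α := 357/1000) (R := 2049/1000) (κ := 79/50) (X := 1111/10000) (by norm_num)
        hb0 hφ hδ hD2 hD (min_le_left _ _ |>.trans (del_bound h0 (b := 177/200) (le_of_lt hb) (by norm_num)))
        (fun r _ => (K_le r).trans (by norm_num)) (by norm_num) (by norm_num) (by norm_num) (by norm_num)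
    have hb0 := h0
    exact piece (α := 0) (R := 687/250) (κ := 79/50) (X := 19/2500) (by norm_num)
        hb0 hφ hδ hD2 hD (min_le_left _ _ |>.trans (del_bound h0 (b := 357/1000) (le_of_lt hb) (by norm_num)))
        (fun r _ => (K_le r).trans (by norm_num)) (by norm_num) (by norm_num) (by norm_num) (by norm_num)
  · intro φ h0 hφ hs
    exact short_bound (φc := 3787/5000) (q := 105717/1000000) h0 hφ hD2 hD hs (by norm_num) (by norm_num)
      (by norm_num) (by norm_num) (by norm_num)
  · push_cast
    nlinarith

lemma num5 {δ : ℝ} (h1 : 5159/10000 ≤ δ) (h2 : δ ≤ 323/625) : NumOK 4 δ := by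
  have hp1 := Real.pi_gt_d4
  have hp2 := Real.pi_lt_d4
  have hD : π - δ ≤ 26257/10000 := by linarith
  have hD2 : 2 ≤ π - δ := by linarith
  have hδ : 0 ≤ δ := by linarith
  refine ⟨18667/50000, 12729/100000, ?_, ?_, ?_⟩
  · intro φ h0 hφ
    rcases le_or_gt (1307/1000) φ with hb0 | hb
    · exact piece (α := 1307/1000) (R := 139/200) (κ := 519/500) (X := 323/625) (by norm_num)
        hb0 hφ hδ hD2 hD (min_le_right _ _ |>.trans h2)
        (fun r hr => (K_le2 (hr.trans (by norm_num))).trans (by norm_num)) (by norm_num) (by norm_num) (by norm_num) (by norm_num)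
    rcases le_or_gt (117/125) φ with hb0 | hb
    · exact piece (α := 117/125) (R := 127/125) (κ := 43/40) (X := 3417/10000) (by norm_num)
        hb0 hφ hδ hD2 hD (min_le_left _ _ |>.trans (del_bound h0 (b := 1307/1000) (le_of_lt hb) (by norm_num)))
        (fun r hr => (K_le3 (hr.trans (by norm_num))).trans (by norm_num)) (by norm_num) (by norm_num) (by norm_num) (by norm_num)
    rcases le_or_gt (423/1000) φ with hb0 | hb
    · exact piece (α := 423/1000) (R := 361/200) (κ := 79/50) (X := 1309/10000) (by norm_num)
        hb0 hφ hδ hD2 hD (min_le_left _ _ |>.trans (del_bound h0 (b := 117/125) (le_of_lt hb) (by norm_num)))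
        (fun r _ => (K_le r).trans (by norm_num)) (by norm_num) (by norm_num) (by norm_num) (by norm_num)
    have hb0 := h0
    exact piece (α := 0) (R := 1313/500) (κ := 79/50) (X := 63/5000) (by norm_num)
        hb0 hφ hδ hD2 hD (min_le_left _ _ |>.trans (del_bound h0 (b := 423/1000) (le_of_lt hb) (by norm_num)))
        (fun r _ => (K_le r).trans (by norm_num)) (by norm_num) (by norm_num) (by norm_num) (by norm_num)
  · intro φ h0 hφ hs
    exact short_bound (φc := 3581/5000) (q := 93483/1000000) h0 hφ hD2 hD hs (by norm_num) (by norm_num)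
      (by norm_num) (by norm_num) (by norm_num)
  · push_cast
    nlinarith

lemma num6 {δ : ℝ} (h1 : 1141/2000 ≤ δ) (h2 : δ ≤ 5709/10000) : NumOK 5 δ := by
  have hp1 := Real.pi_gt_d4
  have hp2 := Real.pi_lt_d4
  have hD : π - δ ≤ 25711/10000 := by linarith
  have hD2 : 2 ≤ π - δ := by linarith
  have hδ : 0 ≤ δ := by linarith
  refine ⟨33533/100000, 231/2000, ?_, ?_, ?_⟩
  · intro φ h0 hφ
    rcases le_or_gt (1489/1000) φ with hb0 | hb
    · exact piece (α := 1489/1000) (R := 289/500) (κ := 127/125) (X := 5709/10000) (by norm_num)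
        hb0 hφ hδ hD2 hD (min_le_right _ _ |>.trans h2)
        (fun r hr => (K_le1 (hr.trans (by norm_num))).trans (by norm_num)) (by norm_num) (by norm_num) (by norm_num) (by norm_num)
    rcases le_or_gt (1281/1000) φ with hb0 | hb
    · exact piece (α := 1281/1000) (R := 131/200) (κ := 519/500) (X := 197/400) (by norm_num)
        hb0 hφ hδ hD2 hD (min_le_left _ _ |>.trans (del_bound h0 (b := 1489/1000) (le_of_lt hb) (by norm_num)))
        (fun r hr => (K_le2 (hr.trans (by norm_num))).trans (by norm_num)) (by norm_num) (by norm_num) (by norm_num) (by norm_num)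
    rcases le_or_gt (233/250) φ with hb0 | hb
    · exact piece (α := 233/250) (R := 483/500) (κ := 43/40) (X := 807/2500) (by norm_num)
        hb0 hφ hδ hD2 hD (min_le_left _ _ |>.trans (del_bound h0 (b := 1281/1000) (le_of_lt hb) (by norm_num)))
        (fun r hr => (K_le3 (hr.trans (by norm_num))).trans (by norm_num)) (by norm_num) (by norm_num) (by norm_num) (by norm_num)
    rcases le_or_gt (121/250) φ with hb0 | hb
    · exact piece (α := 121/250) (R := 1641/1000) (κ := 79/50) (X := 323/2500) (by norm_num)
        hb0 hφ hδ hD2 hD (min_le_left _ _ |>.trans (del_bound h0 (b := 233/250) (le_of_lt hb) (by norm_num)))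
        (fun r _ => (K_le r).trans (by norm_num)) (by norm_num) (by norm_num) (by norm_num) (by norm_num)
    have hb0 := h0
    exact piece (α := 0) (R := 643/250) (κ := 79/50) (X := 187/10000) (by norm_num)
        hb0 hφ hδ hD2 hD (min_le_left _ _ |>.trans (del_bound h0 (b := 121/250) (le_of_lt hb) (by norm_num)))
        (fun r _ => (K_le r).trans (by norm_num)) (by norm_num) (by norm_num) (by norm_num) (by norm_num)
  · intro φ h0 hφ hs
    exact short_bound (φc := 6983/10000) (q := 4423/50000) h0 hφ hD2 hD hs (by norm_num) (by norm_num)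
      (by norm_num) (by norm_num) (by norm_num)
  · push_cast
    nlinarith

/-- bounds for the half-angle of the optimal chord -/
lemma phi_bounds {φ C l u : ℝ} (h0 : 0 ≤ φ) (h1 : φ ≤ π / 2) (hC : φ + Real.sin φ = C)
    (hl0 : 0 ≤ l) (hl : l + (l - l ^ 3 / 6 + l ^ 5 / 120 - l ^ 7 / 5040 + l ^ 9 / 362880) ≤ C)
    (hu0 : 0 ≤ u) (hu : C ≤ u + (u - u ^ 3 / 6 + u ^ 5 / 120 - u ^ 7 / 5040))
    (hl1 : l ≤ π / 2) : l ≤ φ ∧ φ ≤ u := by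
  constructor
  · by_contra hcon
    push Not at hcon
    have := Real.sin_lt_sin_of_lt_of_le_pi_div_two (by linarith [Real.pi_pos]) hl1 hcon
    have := sin_upper hl0
    linarith
  · by_contra hcon
    push Not at hcon
    have := Real.sin_lt_sin_of_lt_of_le_pi_div_two (by linarith [Real.pi_pos]) h1 hcon
    have := sin_lower hu0
    linarith

lemma numOK_of_spec (k : ℕ) (hk : k ∈ ({3, 4, 5, 6} : Set ℕ)) (d : ℝ) (hd : dstarSpec k d) :
    NumOK (k - 1) (d - 1 / 10000) ∧ 0 ≤ d - 1 / 10000 ∧ 2 ≤ π - (d - 1 / 10000) := by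
  have hp1 := Real.pi_gt_d6
  have hp2 := Real.pi_lt_d6
  rcases hd with ⟨rfl, rfl⟩ | ⟨a, ⟨ha0, ha2⟩, hsum, rfl⟩
  · have e : sdelta 2 = π / 2 - 1 := by
      unfold sdelta; norm_num
    rw [e]
    exact ⟨num6 (by linarith) (by linarith), by linarith, by linarith⟩
  · set φ := Real.arcsin (a / 2) with hφ
    have hs : Real.sin φ = a / 2 := Real.sin_arcsin (by linarith) (by linarith)
    have h0 : 0 ≤ φ := Real.arcsin_nonneg.mpr (by linarith)
    have h1 : φ ≤ π / 2 := Real.arcsin_le_pi_div_two _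
    have e : sdelta a = φ - a / 2 := rfl
    rw [e] at hsum ⊢
    have hsum' : φ + Real.sin φ = ((k : ℝ) - 1) * π / k := by rw [hs]; linarith
    simp only [Set.mem_insert_iff, Set.mem_singleton_iff] at hk
    rcases hk with rfl | rfl | rfl | rfl
    · norm_num at hsum hsum'
      obtain ⟨b1, b2⟩ := phi_bounds (l := 117247 / 100000) (u := 117278 / 100000) h0 h1 hsum'
        (by norm_num) (by norm_num; linarith) (by norm_num) (by norm_num; linarith) (by linarith)
      exact ⟨num3 (by linarith) (by linarith), by linarith, by linarith⟩
    · norm_num at hsum hsum'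
      obtain ⟨b1, b2⟩ := phi_bounds (l := 137510 / 100000) (u := 137541 / 100000) h0 h1 hsum'
        (by norm_num) (by norm_num; linarith) (by norm_num) (by norm_num; linarith) (by linarith)
      exact ⟨num4 (by linarith) (by linarith), by linarith, by linarith⟩
    · norm_num at hsum hsum'
      obtain ⟨b1, b2⟩ := phi_bounds (l := 151468 / 100000) (u := 151500 / 100000) h0 h1 hsum'
        (by norm_num) (by norm_num; linarith) (by norm_num) (by norm_num; linarith) (by linarith)
      exact ⟨num5 (by linarith) (by linarith), by linarith, by linarith⟩
    · exfalso
      norm_num at hsum'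
      have := Real.sin_le_one φ
      linarith

lemma arcDist_spec (p q : ℝ) : ∃ n : ℤ, arcDist p q = |p - q + 2 * π * n| ∧
    |p - q + 2 * π * n| ≤ π ∧ ∀ m : ℤ, |p - q + 2 * π * n| ≤ |p - q + 2 * π * m| := by
  have hp := Real.two_pi_pos
  have key : ∀ m : ℤ, |p - q + 2 * π * m| = 2 * π * |(p - q) / (2 * π) - (-m : ℤ)| := by
    intro m
    rw [← abs_of_pos hp, ← abs_mul, abs_of_pos hp]
    congr 1
    push_cast
    field_simp
    ring
  set n : ℤ := -round ((p - q) / (2 * π)) with hn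
  have hmin : ∀ m : ℤ, |p - q + 2 * π * n| ≤ |p - q + 2 * π * m| := by
    intro m
    rw [key n, key m]
    apply mul_le_mul_of_nonneg_left _ hp.le
    rw [hn, neg_neg]
    exact round_le _ _
  refine ⟨n, ?_, ?_, hmin⟩
  · unfold arcDist
    apply le_antisymm
    · exact ciInf_le ⟨0, by rintro _ ⟨m, rfl⟩; exact abs_nonneg _⟩ n
    · exact le_ciInf hmin
  · rw [key n, hn, neg_neg]
    have := abs_sub_round ((p - q) / (2 * π))
    nlinarith

lemma arcDist_nonneg (p q : ℝ) : 0 ≤ arcDist p q := by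
  obtain ⟨n, h, -⟩ := arcDist_spec p q
  rw [h]; exact abs_nonneg _

lemma arcDist_le_pi (p q : ℝ) : arcDist p q ≤ π := by
  obtain ⟨n, h, h2, -⟩ := arcDist_spec p q
  rw [h]; exact h2

lemma arcDist_comm (p q : ℝ) : arcDist p q = arcDist q p := by
  obtain ⟨n, h, -, h2⟩ := arcDist_spec p q
  obtain ⟨m, h', -, h2'⟩ := arcDist_spec q p
  rw [h, h']
  have e : ∀ (a b : ℝ) (j : ℤ), |a - b + 2 * π * j| = |b - a + 2 * π * (-j : ℤ)| := by
    intro a b j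
    rw [← abs_neg]
    congr 1
    push_cast
    ring
  apply le_antisymm
  · rw [e q p m]; exact h2 _
  · rw [e p q n]; exact h2' _

lemma chordLen_comm (p q : ℝ) : chordLen p q = chordLen q p := by
  unfold chordLen; rw [arcDist_comm]

lemma chordLen_nonneg (p q : ℝ) : 0 ≤ chordLen p q := by
  unfold chordLen
  have := Real.sin_nonneg_of_nonneg_of_le_pi (x := arcDist p q / 2)
    (by linarith [arcDist_nonneg p q]) (by linarith [arcDist_le_pi p q, Real.pi_pos])
  linarith

lemma walkCost_nonneg (q p : ℝ) (L : List (ℝ × ℝ)) : 0 ≤ walkCost q p L := by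
  induction L generalizing p with
  | nil => exact arcDist_nonneg _ _
  | cons e L ih =>
    have := arcDist_nonneg p e.1
    have := chordLen_nonneg e.1 e.2
    have := ih e.2
    simp only [walkCost]; linarith

/-- A fixed lift of a chord to the universal cover. -/
lemma lift_data (s : ℝ × ℝ) : ∃ UV : ℝ × ℝ, UV.1 < UV.2 ∧ UV.2 ≤ UV.1 + π ∧
    (IsShortcut s → UV.2 - UV.1 = arcDist s.1 s.2 ∧ ∃ (b : Bool) (c1 c2 : ℤ),
      (if b then UV.1 else UV.2) = s.1 + 2 * π * c1 ∧
      (if b then UV.2 else UV.1) = s.2 + 2 * π * c2) := by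
  by_cases hs : IsShortcut s
  · obtain ⟨n, h1, h2, -⟩ := arcDist_spec s.1 s.2
    have h3 : 0 < arcDist s.1 s.2 := lt_of_le_of_ne (arcDist_nonneg _ _) (Ne.symm hs)
    rw [h1] at h3
    rcases le_or_gt 0 (s.1 - s.2 + 2 * π * n) with h4 | h4
    · rw [abs_of_nonneg h4] at h1 h2 h3
      refine ⟨(s.2, s.1 + 2 * π * n), by simp only; linarith, by simp only; linarith, fun _ => ⟨?_, ?_⟩⟩
      · rw [h1]; ring
      · exact ⟨false, n, 0, by simp, by simp⟩
    · rw [abs_of_neg h4] at h1 h2 h3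
      refine ⟨(s.1 + 2 * π * n, s.2), by simp only; linarith, by simp only; linarith, fun _ => ⟨?_, ?_⟩⟩
      · rw [h1]; ring
      · exact ⟨true, n, 0, by simp, by simp⟩
  · exact ⟨(0, 1), by norm_num, by simp only; linarith [Real.pi_gt_three], fun h => absurd h hs⟩

lemma lift_walk (S : Finset (ℝ × ℝ)) (hval : ∀ s ∈ S, IsShortcut s) (U V : ℝ × ℝ → ℝ)
    (hUV : ∀ s, IsShortcut s → V s - U s = arcDist s.1 s.2 ∧ ∃ (b : Bool) (c1 c2 : ℤ),
      (if b then U s else V s) = s.1 + 2 * π * c1 ∧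
      (if b then V s else U s) = s.2 + 2 * π * c2)
    (q : ℝ) (L : List (ℝ × ℝ)) (hL : ∀ e ∈ L, e ∈ S ∨ (e.2, e.1) ∈ S) (p : ℝ) (j : ℤ) :
    ∃ (n : ℤ) (L' : List (Edge (ℝ × ℝ))), (∀ e ∈ L', e.1 ∈ S) ∧
      lcost U V (q + 2 * π * n) (p + 2 * π * j) L' = walkCost q p L := by
  induction L generalizing p j with
  | nil =>
    obtain ⟨n, h1, -⟩ := arcDist_spec p q
    refine ⟨j - n, [], by simp, ?_⟩
    simp only [lcost, walkCost]
    rw [h1]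
    congr 1
    push_cast
    ring
  | cons e L ih =>
    obtain ⟨s, hs, b, c1, c2, h1, h2, h3⟩ : ∃ s ∈ S, ∃ (b : Bool) (c1 c2 : ℤ),
        (if b then U s else V s) = e.1 + 2 * π * c1 ∧
        (if b then V s else U s) = e.2 + 2 * π * c2 ∧ len U V s = chordLen e.1 e.2 := by
      rcases hL e List.mem_cons_self with he | he
      · obtain ⟨g1, b, c1, c2, g2, g3⟩ := hUV e (hval e he)
        exact ⟨e, he, b, c1, c2, g2, g3, by unfold len chordLen; rw [g1]⟩
      · obtain ⟨g1, b, c1, c2, g2, g3⟩ := hUV _ (hval _ he)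
        refine ⟨_, he, !b, c2, c1, ?_, ?_, ?_⟩
        · rw [← g3]; cases b <;> simp
        · rw [← g2]; cases b <;> simp
        · rw [chordLen_comm]
          unfold len chordLen; rw [g1]
    obtain ⟨n, hn, -⟩ := arcDist_spec p e.1
    obtain ⟨m, L', hL', hc⟩ := ih (fun f hf => hL f (List.mem_cons_of_mem _ hf)) e.2
      (c2 + (j - n - c1))
    refine ⟨m, (s, j - n - c1, b) :: L', ?_, ?_⟩
    · intro f hf
      rcases List.mem_cons.mp hf with rfl | hf
      · exact hs
      · exact hL' f hf
    · simp only [lcost, walkCost]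
      have e1 : tgt U V (s, j - n - c1, b) = e.2 + 2 * π * ((c2 + (j - n - c1) : ℤ) : ℝ) := by
        simp only [tgt]; rw [h2]; push_cast; ring
      have e2 : p + 2 * π * j - src U V (s, j - n - c1, b) = p - e.1 + 2 * π * n := by
        simp only [src]; rw [h1]; push_cast; ring
      rw [e1, hc, e2, h3, hn]

lemma dS_le (S : Finset (ℝ × ℝ)) (p q : ℝ) (L : List (ℝ × ℝ))
    (hL : ∀ e ∈ L, e ∈ S ∨ (e.2, e.1) ∈ S) : dS S p q ≤ walkCost q p L :=
  csInf_le ⟨0, by rintro _ ⟨L, -, rfl⟩; exact walkCost_nonneg _ _ _⟩ ⟨L, hL, rfl⟩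

lemma exists_walk_of_lt (S : Finset (ℝ × ℝ)) (p q c : ℝ) (h : dS S p q < c) :
    ∃ L : List (ℝ × ℝ), (∀ e ∈ L, e ∈ S ∨ (e.2, e.1) ∈ S) ∧ walkCost q p L < c := by
  have hne : {c | ∃ L : List (ℝ × ℝ), (∀ e ∈ L, e ∈ S ∨ (e.2, e.1) ∈ S) ∧
      c = walkCost q p L}.Nonempty := ⟨_, [], by simp, rfl⟩
  obtain ⟨_, ⟨L, hL, rfl⟩, h2⟩ := exists_lt_of_csInf_lt hne h
  exact ⟨L, hL, h2⟩

lemma dS_le_diamS (S : Finset (ℝ × ℝ)) (p q : ℝ) : dS S p q ≤ diamS S := by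
  refine le_csSup ⟨π, ?_⟩ ⟨p, q, rfl⟩
  rintro _ ⟨p, q, rfl⟩
  exact (dS_le S p q [] (by simp)).trans (arcDist_le_pi p q)

/-- No near-optimal configuration contains a short chord. -/
lemma no_short (S : Finset (ℝ × ℝ)) (hval : ∀ s ∈ S, IsShortcut s) (δ : ℝ) (hδ : 0 ≤ δ)
    (hδ2 : 2 ≤ π - δ) (hN : NumOK (S.card - 1) δ) (hdiam : diamS S < π - δ)
    (g : ℝ × ℝ) (hg : g ∈ S) (hgs : chordLen g.1 g.2 ≤ (π - δ) / 2) : False := by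
  choose UV hUV1 hUV2 hUV3 using lift_data
  set U : ℝ × ℝ → ℝ := fun s => (UV s).1 with hU
  set V : ℝ × ℝ → ℝ := fun s => (UV s).2 with hV
  have hG : Good U V := fun s => ⟨hUV1 s, hUV2 s⟩
  have hC : Conn U V S (π - δ) := by
    intro p q
    obtain ⟨L, hL, hc⟩ := exists_walk_of_lt S p q (π - δ) ((dS_le_diamS S p q).trans_lt hdiam)
    obtain ⟨n, L', hL', hc'⟩ := lift_walk S hval U V hUV3 q L hL p 0
    refine ⟨n, L', hL', ?_⟩
    rw [← hc'] at hc
    simpa using hc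
  have hcore := core hG S δ hδ hδ2 hC
  obtain ⟨H, Hs, hH, hHs, hlt⟩ := hN
  have hterm : ∀ i, min (del U V i) δ * rad U V (π - δ) i = hfun δ ((V i - U i) / 2) := by
    intro i; rfl
  have hle : ∀ i, 0 ≤ (V i - U i) / 2 ∧ (V i - U i) / 2 ≤ π / 2 := by
    intro i
    have := hG i
    constructor <;> linarith
  rw [← Finset.add_sum_erase S _ hg] at hcore
  have h1 : min (del U V g) δ * rad U V (π - δ) g ≤ Hs := by
    rw [hterm]
    refine hHs _ (hle g).1 (hle g).2 ?_
    have := (hUV3 g (hval g hg)).1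
    have e : V g - U g = arcDist g.1 g.2 := this
    rw [e]
    exact hgs
  have h2 : ∑ i ∈ S.erase g, min (del U V i) δ * rad U V (π - δ) i ≤ (S.card - 1 : ℕ) * H := by
    have := Finset.sum_le_card_nsmul (S.erase g)
      (fun i => min (del U V i) δ * rad U V (π - δ) i) H (fun i _ => by
        simp only [hterm]; exact hH _ (hle i).1 (hle i).2)
    rwa [Finset.card_erase_of_mem hg, nsmul_eq_mul] at this
  linarith

end CircleShortcut

/-- antipodal pairs never need a combination of shortcuts: if
`k ∈ {3,4,5,6}` and `S` is a set of `k` shortcuts with `diam(S) ≤ π - δ*_k`, then for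
every antipodal pair `p`, `q = p + π` we have
`d_S(p,q) = min(d(p,q), min_{s ∈ S} d_{{s}}(p,q))`. -/
theorem stmt19 (k : ℕ) (hk : k ∈ ({3, 4, 5, 6} : Set ℕ)) (dstar : ℝ)
    (hd : dstarSpec k dstar)
    (S : Finset (ℝ × ℝ)) (hcard : S.card = k) (hval : ∀ s ∈ S, IsShortcut s)
    (hdiam : diamS S ≤ π - dstar) (p : ℝ) :
    dS S p (p + π) = min (arcDist p (p + π))
      (S.inf' (Finset.card_pos.mp (by
          rw [hcard]
          simp only [Set.mem_insert_iff, Set.mem_singleton_iff] at hk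
          rcases hk with rfl | rfl | rfl | rfl <;> norm_num))
        fun s => dOne s.1 s.2 p (p + π)) := by
  have hne : S.Nonempty := Finset.card_pos.mp (by
    rw [hcard]
    simp only [Set.mem_insert_iff, Set.mem_singleton_iff] at hk
    rcases hk with rfl | rfl | rfl | rfl <;> norm_num)
  apply le_antisymm
  · refine le_min (CircleShortcut.dS_le S p _ [] (by simp)) ?_
    refine Finset.le_inf' _ _ (fun s hs => ?_)
    unfold dOne
    refine le_min (CircleShortcut.dS_le S p _ [] (by simp)) (le_min ?_ ?_)
    · have := CircleShortcut.dS_le S p (p + π) [(s.1, s.2)] (by simp [hs])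
      simp only [walkCost] at this
      exact this
    · have := CircleShortcut.dS_le S p (p + π) [(s.2, s.1)] (by simp [hs])
      simp only [walkCost] at this
      rwa [CircleShortcut.chordLen_comm s.2 s.1] at this
  · by_contra hcon
    push Not at hcon
    obtain ⟨hN, hδ, hδ2⟩ := CircleShortcut.numOK_of_spec k hk dstar hd
    have hD : diamS S < π - (dstar - 1 / 10000) := by linarith
    obtain ⟨L, hL, hc⟩ := CircleShortcut.exists_walk_of_lt S p (p + π) _
      (lt_min hcon ((CircleShortcut.dS_le_diamS S p (p + π)).trans_lt hD))
    obtain ⟨hc1, hc2⟩ := lt_min_iff.mp hc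
    obtain ⟨hc1, hc3⟩ := lt_min_iff.mp hc1
    rw [← hcard] at hN
    rcases L with _ | ⟨e, _ | ⟨f, T⟩⟩
    · exact lt_irrefl _ hc1
    · simp only [walkCost] at hc3
      rw [Finset.lt_inf'_iff] at hc3
      rcases hL e List.mem_cons_self with he | he
      · have := hc3 e he
        unfold dOne at this
        exact absurd (this.trans_le ((min_le_right _ _).trans (min_le_left _ _))) (lt_irrefl _)
      · have := hc3 _ he
        unfold dOne at this
        have h2 := this.trans_le ((min_le_right _ _).trans (min_le_right _ _))
        simp only at h2
        rw [CircleShortcut.chordLen_comm e.2 e.1] at h2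
        exact absurd h2 (lt_irrefl _)
    · simp only [walkCost] at hc2
      have a1 := CircleShortcut.arcDist_nonneg p e.1
      have a2 := CircleShortcut.arcDist_nonneg e.2 f.1
      have a3 := CircleShortcut.walkCost_nonneg (p + π) f.2 T
      have key : ∀ e : ℝ × ℝ, (e ∈ S ∨ (e.2, e.1) ∈ S) →
          chordLen e.1 e.2 ≤ (π - (dstar - 1 / 10000)) / 2 → False := by
        intro e he hle
        rcases he with he | he
        · exact CircleShortcut.no_short S hval _ hδ hδ2 hN hD e he hle
        · refine CircleShortcut.no_short S hval _ hδ hδ2 hN hD _ he ?_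
          rw [CircleShortcut.chordLen_comm]; exact hle
      rcases le_total (chordLen e.1 e.2) (chordLen f.1 f.2) with hef | hef
      · exact key e (hL e (by simp)) (by linarith)
      · exact key f (hL f (by simp)) (by linarith)
end
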